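/- Let $X$ and $n$ be positive integers with $X$ odd and $n > 1$. Then $|X^2 - 2^n| > 2^{0.26 n}$, unless $X^2 - 2^n = 1$ or $X^2 - 2^n = -7$. -/

import Mathlib

open Finset in
/-- product of `h - 2 i` -/
def uu (h : ℤ) (j : ℕ) : ℤ := ∏ i ∈ Finset.range j, (h - 2 * (i : ℤ))

/-- coefficients of the Padé polynomials -/
noncomputable def cf (h h' : ℤ) (b j : ℕ) : ℝ :=
  (uu h j : ℝ) * (uu h' (b - j) : ℝ) / (2 ^ b * (j.factorial : ℝ) * ((b - j).factorial : ℝ))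

noncomputable def S0 (h h' : ℤ) (b : ℕ) (w : ℝ) : ℝ := ∑ j ∈ Finset.range (b + 1), cf h h' b j * w ^ j
noncomputable def S1 (h h' : ℤ) (b : ℕ) (w : ℝ) : ℝ :=
  ∑ j ∈ Finset.range (b + 1), (j : ℝ) * (cf h h' b j * w ^ j)
noncomputable def S2 (h h' : ℤ) (b : ℕ) (w : ℝ) : ℝ :=
  ∑ j ∈ Finset.range (b + 1), (j : ℝ) ^ 2 * (cf h h' b j * w ^ j)

theorem uu_succ (h : ℤ) (j : ℕ) : uu h (j + 1) = uu h j * (h - 2 * (j : ℤ)) := by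
  simp [uu, Finset.prod_range_succ]

theorem cf_rec (h h' : ℤ) (b j : ℕ) (hj : j < b) :
    ((j : ℝ) + 1) * ((h' : ℝ) - 2 * b + 2 * (j + 1)) * cf h h' b (j + 1)
      = ((h : ℝ) - 2 * j) * ((b : ℝ) - j) * cf h h' b j := by
  obtain ⟨d, rfl⟩ : ∃ d, b = j + 1 + d := ⟨b - (j + 1), by omega⟩
  have e1 : j + 1 + d - (j + 1) = d := by omega
  have e2 : j + 1 + d - j = d + 1 := by omega
  unfold cf
  rw [e1, e2, uu_succ, uu_succ, Nat.factorial_succ, Nat.factorial_succ]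
  push_cast
  have a1 : (j.factorial : ℝ) ≠ 0 := by positivity
  have a2 : (d.factorial : ℝ) ≠ 0 := by positivity
  have a3 : (j : ℝ) + 1 ≠ 0 := by positivity
  have a4 : (d : ℝ) + 1 ≠ 0 := by positivity
  field_simp
  ring

theorem S_ode (h h' : ℤ) (b : ℕ) (w : ℝ) :
    ((h' : ℝ) - 2 * b) * S1 h h' b w + 2 * S2 h h' b w
      = w * ((h : ℝ) * b * S0 h h' b w - ((h : ℝ) + 2 * b) * S1 h h' b w + 2 * S2 h h' b w) := by
  have L : ((h' : ℝ) - 2 * b) * S1 h h' b w + 2 * S2 h h' b w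
      = ∑ j ∈ Finset.range (b + 1), (j : ℝ) * ((h' : ℝ) - 2 * b + 2 * j) * cf h h' b j * w ^ j := by
    unfold S1 S2
    rw [Finset.mul_sum, Finset.mul_sum, ← Finset.sum_add_distrib]
    exact Finset.sum_congr rfl fun j _ => by ring
  have R : (h : ℝ) * b * S0 h h' b w - ((h : ℝ) + 2 * b) * S1 h h' b w + 2 * S2 h h' b w
      = ∑ j ∈ Finset.range (b + 1), ((h : ℝ) - 2 * j) * ((b : ℝ) - j) * cf h h' b j * w ^ j := by
    unfold S0 S1 S2
    rw [Finset.mul_sum, Finset.mul_sum, Finset.mul_sum, ← Finset.sum_sub_distrib,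
      ← Finset.sum_add_distrib]
    exact Finset.sum_congr rfl fun j _ => by ring
  rw [L, R, Finset.sum_range_succ', Finset.sum_range_succ]
  simp only [Nat.cast_zero, zero_mul, add_zero, sub_self, mul_zero]
  rw [Finset.mul_sum]
  refine Finset.sum_congr rfl fun j hj => ?_
  have := cf_rec h h' b j (Finset.mem_range.mp hj)
  push_cast
  rw [this]
  ring

theorem S0_deriv (h h' : ℤ) (b : ℕ) (w : ℝ) (hw : w ≠ 0) :
    HasDerivAt (S0 h h' b) (S1 h h' b w / w) w := by
  unfold S0 S1
  rw [Finset.sum_div]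
  refine HasDerivAt.fun_sum fun j _ => ?_
  refine ((hasDerivAt_pow j w).const_mul (cf h h' b j)).congr_deriv ?_
  rcases j with _ | j
  · simp
  · field_simp
    simp [pow_succ]
    try ring

theorem S1_deriv (h h' : ℤ) (b : ℕ) (w : ℝ) (hw : w ≠ 0) :
    HasDerivAt (S1 h h' b) (S2 h h' b w / w) w := by
  unfold S1 S2
  rw [Finset.sum_div]
  refine HasDerivAt.fun_sum fun j _ => ?_
  refine (((hasDerivAt_pow j w).const_mul (cf h h' b j)).const_mul (j : ℝ)).congr_deriv ?_
  rcases j with _ | j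
  · simp
  · field_simp
    simp [pow_succ]
    try ring

theorem S0_cont (h h' : ℤ) (b : ℕ) : Continuous (S0 h h' b) := by
  unfold S0; fun_prop
theorem S1_cont (h h' : ℤ) (b : ℕ) : Continuous (S1 h h' b) := by
  unfold S1; fun_prop

/-- Wronskian -/
noncomputable def WW (a b : ℕ) (w : ℝ) : ℝ :=
  1 / 2 * S0 (2 * b + 1) (2 * a - 1) a w * S0 (2 * a - 1) (2 * b + 1) b w
   - (S1 (2 * b + 1) (2 * a - 1) a w * S0 (2 * a - 1) (2 * b + 1) b w
     - S0 (2 * b + 1) (2 * a - 1) a w * S1 (2 * a - 1) (2 * b + 1) b w)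

theorem WW_deriv (a b : ℕ) (w : ℝ) (hw : 0 < w) (hw1 : w < 1) :
    HasDerivAt (WW a b) (-((a : ℝ) + b) * WW a b w / (1 - w)) w := by
  have hP := S_ode (2 * b + 1) (2 * a - 1) a w
  have hQ := S_ode (2 * a - 1) (2 * b + 1) b w
  have dP0 := S0_deriv (2 * b + 1) (2 * a - 1) a w hw.ne'
  have dP1 := S1_deriv (2 * b + 1) (2 * a - 1) a w hw.ne'
  have dQ0 := S0_deriv (2 * a - 1) (2 * b + 1) b w hw.ne'
  have dQ1 := S1_deriv (2 * a - 1) (2 * b + 1) b w hw.ne'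
  have := ((dP0.const_mul (1/2 : ℝ)).mul dQ0).sub ((dP1.mul dQ0).sub (dP0.mul dQ1))
  refine this.congr_deriv ?_
  simp only [WW]
  generalize S0 (2 * b + 1) (2 * a - 1) a w = P0 at *
  generalize S1 (2 * b + 1) (2 * a - 1) a w = P1 at *
  generalize S2 (2 * b + 1) (2 * a - 1) a w = P2 at *
  generalize S0 (2 * a - 1) (2 * b + 1) b w = Q0 at *
  generalize S1 (2 * a - 1) (2 * b + 1) b w = Q1 at *
  generalize S2 (2 * a - 1) (2 * b + 1) b w = Q2 at *
  push_cast at hP hQ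
  have h1 : 1 - w ≠ 0 := by linarith
  field_simp
  linear_combination P0 * hQ - Q0 * hP

theorem WW_eq (a b : ℕ) (w : ℝ) (hw : 0 < w) (hw1 : w < 1) :
    WW a b w = WW a b 0 * (1 - w) ^ (a + b) := by
  have hc : Continuous (WW a b) := by
    unfold WW
    have := S0_cont (2 * b + 1) (2 * a - 1) a
    have := S0_cont (2 * a - 1) (2 * b + 1) b
    have := S1_cont (2 * b + 1) (2 * a - 1) a
    have := S1_cont (2 * a - 1) (2 * b + 1) b
    fun_prop
  obtain ⟨c, hc, he⟩ := exists_hasDerivAt_eq_slope (fun t => WW a b t / (1 - t) ^ (a + b))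
    (fun _ => 0) hw (by
      refine ContinuousOn.div hc.continuousOn (by fun_prop) ?_
      intro x hx
      have := hx.2
      have : 0 < 1 - x := by linarith
      positivity) (by
      intro x hx
      have hx1 : x < 1 := by have := hx.2; linarith
      have h1 : 0 < 1 - x := by linarith
      have d1 := WW_deriv a b x hx.1 hx1
      have d2 : HasDerivAt (fun t : ℝ => (1 - t) ^ (a + b)) (((a + b : ℕ) : ℝ) * (1 - x) ^ (a + b - 1) * (-1)) x := by
        exact ((hasDerivAt_id x).const_sub 1).pow (a + b)
      refine (d1.div d2 (by positivity)).congr_deriv ?_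
      rcases Nat.eq_zero_or_pos (a + b) with h0 | h0
      · have : a = 0 := by omega
        have : b = 0 := by omega
        subst a b; simp
      · obtain ⟨k, hk⟩ : ∃ k, a + b = k + 1 := ⟨a + b - 1, by omega⟩
        have hk' : (a : ℝ) + b = k + 1 := by exact_mod_cast hk
        rw [hk, hk']
        simp only [Nat.add_sub_cancel]
        push_cast
        field_simp
        ring)
  have h1 : 0 < 1 - w := by linarith
  have : WW a b w / (1 - w) ^ (a + b) - WW a b 0 = 0 := by
    have h2 : (w - 0) ≠ 0 := by linarith
    have h3 : WW a b w / (1 - w) ^ (a + b) - WW a b 0 / (1 - 0) ^ (a + b) = 0 := by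
      rcases div_eq_zero_iff.mp he.symm with h | h
      · exact h
      · exact absurd h h2
    simpa using h3
  field_simp at this
  linarith

/-- values at zero -/
theorem S0_zero (h h' : ℤ) (b : ℕ) : S0 h h' b 0 = (uu h' b : ℝ) / (2 ^ b * (b.factorial : ℝ)) := by
  unfold S0
  rw [Finset.sum_range_succ']
  simp [cf, uu]

theorem S1_zero (h h' : ℤ) (b : ℕ) : S1 h h' b 0 = 0 := by
  unfold S1
  rw [Finset.sum_range_succ']
  simp

theorem uu_pos (h : ℤ) (j : ℕ) (hj : 2 * (j : ℤ) ≤ h + 1) : 0 < uu h j := by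
  unfold uu
  refine Finset.prod_pos fun i hi => ?_
  have := Finset.mem_range.mp hi
  omega

theorem uu_le (c j : ℕ) : 2 * j ≤ c → uu (c : ℤ) j ≤ 2 ^ j * (((c + 1) / 2).descFactorial j : ℤ) := by
  induction j with
  | zero => simp [uu]
  | succ j ih =>
    intro hj
    rw [uu_succ, Nat.descFactorial_succ, pow_succ]
    have h1 := ih (by omega)
    have h2 : (c : ℤ) - 2 * j ≤ 2 * (((c + 1) / 2 - j : ℕ) : ℤ) := by omega
    have h3 : 0 ≤ (c : ℤ) - 2 * j := by omega
    have h4 := uu_pos c j (by omega)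
    calc uu c j * ((c : ℤ) - 2 * j) ≤ (2 ^ j * (((c + 1) / 2).descFactorial j : ℤ)) * (2 * (((c + 1) / 2 - j : ℕ) : ℤ)) := by
          apply mul_le_mul h1 h2 h3 (by positivity)
      _ = _ := by push_cast; ring

theorem WW_zero (a b : ℕ) (ha : 0 < a) : 0 < WW a b 0 ∧ WW a b 0 ≤ ((b : ℝ) + 1) / 2 := by
  have e : WW a b 0 = 1 / 2 * ((uu (2 * a - 1) a : ℝ) / (2 ^ a * (a.factorial : ℝ))) *
     ((uu (2 * b + 1) b : ℝ) / (2 ^ b * (b.factorial : ℝ))) := by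
    unfold WW
    rw [S0_zero, S0_zero, S1_zero, S1_zero]; ring
  have p1 : (0 : ℝ) < (uu (2 * a - 1) a : ℝ) := Int.cast_pos.mpr (uu_pos _ _ (by omega))
  have p2 : (0 : ℝ) < (uu (2 * b + 1) b : ℝ) := Int.cast_pos.mpr (uu_pos _ _ (by omega))
  have l1 : (uu (2 * a - 1) a : ℝ) ≤ 2 ^ a * (a.factorial : ℝ) := by
    have hh : ∀ j : ℕ, j ≤ a → uu (2 * a - 1) j ≤ 2 ^ j * (a.descFactorial j : ℤ) := by
      intro j
      induction j with
      | zero => simp [uu]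
      | succ j ih =>
        intro hj
        rw [uu_succ, Nat.descFactorial_succ, pow_succ]
        have h1 := ih (by omega)
        have h2 : (2 * a - 1 : ℤ) - 2 * j ≤ 2 * ((a - j : ℕ) : ℤ) := by omega
        have h3 : 0 ≤ (2 * a - 1 : ℤ) - 2 * j := by omega
        calc uu (2 * a - 1) j * ((2 * a - 1 : ℤ) - 2 * j) ≤ (2 ^ j * (a.descFactorial j : ℤ)) * (2 * ((a - j : ℕ) : ℤ)) := by
              apply mul_le_mul h1 h2 h3 (by positivity)
          _ = _ := by push_cast; ring
    have := hh a le_rfl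
    rw [Nat.descFactorial_self] at this
    exact_mod_cast this
  have l2 : (uu (2 * b + 1) b : ℝ) ≤ 2 ^ b * (b.factorial : ℝ) * (b + 1) := by
    have := uu_le (2 * b + 1) b (by omega)
    rw [show (2 * b + 1 + 1) / 2 = b + 1 by omega] at this
    have h5 : (b + 1).descFactorial b = (b + 1).factorial := by
      have := Nat.factorial_mul_descFactorial (n := b + 1) (k := b) (by omega)
      simpa using this
    rw [h5, Nat.factorial_succ] at this
    have h6 : ((uu (2 * b + 1) b : ℤ) : ℝ) ≤ ((2 ^ b * ((b + 1) * b.factorial) : ℤ) : ℝ) := by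
      exact_mod_cast this
    push_cast at h6
    push_cast
    linarith
  rw [e]
  constructor
  · positivity
  · have q1 : (uu (2 * a - 1) a : ℝ) / (2 ^ a * (a.factorial : ℝ)) ≤ 1 := by
      rw [div_le_one (by positivity)]; exact l1
    have q2 : (uu (2 * b + 1) b : ℝ) / (2 ^ b * (b.factorial : ℝ)) ≤ b + 1 := by
      rw [div_le_iff₀ (by positivity)]; linarith
    have q3 : 0 ≤ (uu (2 * b + 1) b : ℝ) / (2 ^ b * (b.factorial : ℝ)) := by positivity
    nlinarith


theorem choose_half (h : ℤ) (j : ℕ) :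
    Ring.choose ((h : ℝ) / 2) j = (uu h j : ℝ) / (2 ^ j * (j.factorial : ℝ)) := by
  have e := Ring.descPochhammer_eq_factorial_smul_choose ((h : ℝ) / 2) j
  have e2 : ((descPochhammer ℤ j).smeval ((h : ℝ) / 2)) = (uu h j : ℝ) / 2 ^ j := by
    rw [← Polynomial.aeval_eq_smeval, ← Polynomial.eval_map_algebraMap, descPochhammer_map, descPochhammer_eval_eq_prod_range]
    induction j with
    | zero => simp [uu]
    | succ j ih =>
      have e' := Ring.descPochhammer_eq_factorial_smul_choose ((h : ℝ) / 2) j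
      rw [Finset.prod_range_succ, ih e', uu_succ, pow_succ]
      push_cast
      field_simp
  rw [e2, nsmul_eq_mul] at e
  have : (j.factorial : ℝ) ≠ 0 := by positivity
  field_simp at e ⊢
  linarith

theorem S0_one (h h' : ℤ) (b N : ℕ) (hh : h + h' = 2 * N) : S0 h h' b 1 = (N.choose b : ℝ) := by
  have e : (N : ℝ) = (h : ℝ) / 2 + (h' : ℝ) / 2 := by
    have : (h : ℝ) + h' = 2 * N := by exact_mod_cast hh
    linarith
  rw [← Ring.choose_natCast (R := ℝ) N b, e, Ring.add_choose_eq b (Commute.all _ _),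
    Finset.Nat.sum_antidiagonal_eq_sum_range_succ_mk]
  unfold S0
  refine Finset.sum_congr rfl fun j hj => ?_
  have hj' : j ≤ b := by have := Finset.mem_range.mp hj; omega
  rw [choose_half, choose_half, one_pow, mul_one]
  unfold cf
  have : (2 : ℝ) ^ b = 2 ^ j * 2 ^ (b - j) := by rw [← pow_add]; congr 1; omega
  rw [this]
  field_simp

theorem cfQ_nonneg (a b j : ℕ) (hab : b ≤ a) (hj : j ≤ b) : 0 ≤ cf (2 * a - 1) (2 * b + 1) b j := by
  unfold cf
  have h1 : 0 < uu (2 * a - 1) j := uu_pos _ _ (by omega)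
  have h2 : 0 < uu (2 * b + 1) (b - j) := uu_pos _ _ (by omega)
  have h1' : (0 : ℝ) < uu (2 * a - 1) j := Int.cast_pos.mpr h1
  have h2' : (0 : ℝ) < uu (2 * b + 1) (b - j) := Int.cast_pos.mpr h2
  positivity

theorem Q_mono (a b : ℕ) (hab : b ≤ a) (w v : ℝ) (hw : 0 ≤ w) (hwv : w ≤ v) :
    S0 (2 * a - 1) (2 * b + 1) b w ≤ S0 (2 * a - 1) (2 * b + 1) b v := by
  unfold S0
  refine Finset.sum_le_sum fun j hj => ?_
  have hj' : j ≤ b := by have := Finset.mem_range.mp hj; omega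
  exact mul_le_mul_of_nonneg_left (by gcongr) (cfQ_nonneg a b j hab hj')

theorem Q_lower (a b : ℕ) (hab : b ≤ a) (w : ℝ) (hw : 0 ≤ w) (hw1 : w ≤ 1) :
    ((a + b).choose b : ℝ) * w ^ b ≤ S0 (2 * a - 1) (2 * b + 1) b w := by
  rw [← S0_one (2 * a - 1) (2 * b + 1) b (a + b) (by push_cast; ring)]
  unfold S0
  rw [Finset.sum_mul]
  refine Finset.sum_le_sum fun j hj => ?_
  have hj' : j ≤ b := by have := Finset.mem_range.mp hj; omega
  rw [one_pow, mul_one]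
  exact mul_le_mul_of_nonneg_left (pow_le_pow_of_le_one hw hw1 hj') (cfQ_nonneg a b j hab hj')

theorem pade_remainder (a b : ℕ) (ha : 0 < a) (hab : b ≤ a) (w : ℝ) (hw : 0 < w) (hw1 : w < 1) :
    |S0 (2 * b + 1) (2 * a - 1) a w - √w * S0 (2 * a - 1) (2 * b + 1) b w|
      ≤ ((b : ℝ) + 1) / 2 * (1 - w) ^ (a + b + 1) / (w * (((a + b).choose b : ℝ) * w ^ b)) := by
  have hB : (0 : ℝ) < ((a + b).choose b : ℝ) := by
    exact_mod_cast Nat.choose_pos (by omega)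
  have hlow := Q_lower a b hab w hw.le hw1.le
  have hQw : 0 < S0 (2 * a - 1) (2 * b + 1) b w := lt_of_lt_of_le (by positivity) hlow
  have hQ : ∀ v, w ≤ v → 0 < S0 (2 * a - 1) (2 * b + 1) b v := fun v hv =>
    hQw.trans_le (Q_mono a b hab w v hw.le hv)
  have hsq : 0 < √w := Real.sqrt_pos.mpr hw
  obtain ⟨c, hc, he⟩ := exists_hasDerivAt_eq_slope
    (fun t => S0 (2 * b + 1) (2 * a - 1) a t / (√t * S0 (2 * a - 1) (2 * b + 1) b t))
    (fun t => - WW a b t / (t * √t * (S0 (2 * a - 1) (2 * b + 1) b t) ^ 2)) hw1 (by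
      refine ContinuousOn.div (S0_cont _ _ _).continuousOn
        (Real.continuous_sqrt.mul (S0_cont _ _ _)).continuousOn ?_
      intro x hx
      have h1 := hQ x hx.1
      have h2 : 0 < √x := Real.sqrt_pos.mpr (hw.trans_le hx.1)
      positivity) (by
      intro x hx
      have hx0 : 0 < x := hw.trans hx.1
      have h1 := hQ x hx.1.le
      have h2 : 0 < √x := Real.sqrt_pos.mpr hx0
      have d1 := S0_deriv (2 * b + 1) (2 * a - 1) a x hx0.ne'
      have d2 := S0_deriv (2 * a - 1) (2 * b + 1) b x hx0.ne'
      have d3 := Real.hasDerivAt_sqrt hx0.ne'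
      refine (d1.div (d3.mul d2) (by simp; constructor <;> positivity)).congr_deriv ?_
      simp only [WW, Pi.mul_apply]
      have h3 : x = √x * √x := (Real.mul_self_sqrt hx0.le).symm
      generalize √x = s at *
      generalize S0 (2 * b + 1) (2 * a - 1) a x = P0 at *
      generalize S1 (2 * b + 1) (2 * a - 1) a x = P1 at *
      generalize S0 (2 * a - 1) (2 * b + 1) b x = Q0 at *
      generalize S1 (2 * a - 1) (2 * b + 1) b x = Q1 at *
      subst h3
      field_simp
      ring)
  have hPQ1 : S0 (2 * b + 1) (2 * a - 1) a 1 = S0 (2 * a - 1) (2 * b + 1) b 1 := by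
    rw [S0_one (2 * a - 1) (2 * b + 1) b (a + b) (by push_cast; ring),
      S0_one (2 * b + 1) (2 * a - 1) a (a + b) (by push_cast; ring), Nat.choose_symm_add]
  have hQ1 := hQ 1 hw1.le
  rw [hPQ1, Real.sqrt_one, one_mul, div_self hQ1.ne'] at he
  have hc0 : 0 < c := hw.trans hc.1
  have hWc := WW_eq a b c hc0 hc.2
  obtain ⟨w0, w1⟩ := WW_zero a b ha
  have h1w : 0 < 1 - w := by linarith
  have h1c : 0 < 1 - c := by linarith [hc.2]
  -- bound on the derivative
  have hb : WW a b c / (c * √c * (S0 (2 * a - 1) (2 * b + 1) b c) ^ 2)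
      ≤ ((b : ℝ) + 1) / 2 * (1 - w) ^ (a + b) / (w * √w * (S0 (2 * a - 1) (2 * b + 1) b w) ^ 2) := by
    rw [hWc]
    have k1 : √w ≤ √c := Real.sqrt_le_sqrt hc.1.le
    have k2 := Q_mono a b hab w c hw.le hc.1.le
    have k3 := hc.1.le
    have k4 : 1 - c ≤ 1 - w := by linarith
    gcongr
  have hb0 : 0 ≤ WW a b c / (c * √c * (S0 (2 * a - 1) (2 * b + 1) b c) ^ 2) := by
    rw [hWc]
    have := Real.sqrt_nonneg c
    positivity
  set P := S0 (2 * b + 1) (2 * a - 1) a w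
  set Q := S0 (2 * a - 1) (2 * b + 1) b w
  set T := WW a b c / (c * √c * (S0 (2 * a - 1) (2 * b + 1) b c) ^ 2) with hT
  have he2 : P - √w * Q = T * (1 - w) * (√w * Q) := by
    have e3 : -T = (1 - P / (√w * Q)) / (1 - w) := by rw [← he, hT]; ring
    field_simp at e3
    linarith
  rw [he2, abs_of_nonneg (by positivity)]
  calc T * (1 - w) * (√w * Q) ≤ (((b : ℝ) + 1) / 2 * (1 - w) ^ (a + b) / (w * √w * Q ^ 2)) * (1 - w) * (√w * Q) := by
        gcongr
    _ = ((b : ℝ) + 1) / 2 * (1 - w) ^ (a + b + 1) / (w * Q) := by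
        field_simp
        ring
    _ ≤ _ := by gcongr


/-- content indicator -/
def ff (a b r : ℕ) : Prop := (2 * a / r) % 2 = 1 ∧ (2 * b / r) % 2 = 1

instance (a b r : ℕ) : Decidable (ff a b r) := by unfold ff; infer_instance

def cnt (h : ℤ) (j r : ℕ) : ℕ := ((Finset.range j).filter (fun i : ℕ => (r : ℤ) ∣ h - 2 * (i : ℤ))).card

theorem cnt_ge (h : ℤ) (j r i0 : ℕ) (hr : 0 < r) (hi : i0 < r) (hd : (r : ℤ) ∣ h - 2 * (i0 : ℤ)) :
    j / r + (if i0 < j % r then 1 else 0) ≤ cnt h j r := by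
  have := Nat.count_modEq_card j hr i0
  rw [Nat.mod_eq_of_lt hi] at this
  rw [← this, Nat.count_eq_card_filter_range]
  unfold cnt
  refine Finset.card_le_card ?_
  intro i
  simp only [Finset.mem_filter]
  rintro ⟨h1, h2⟩
  refine ⟨h1, ?_⟩
  have h3 : (r : ℤ) ∣ (i0 : ℤ) - i := (Nat.modEq_iff_dvd.mp h2)
  have : h - 2 * (i : ℤ) = (h - 2 * i0) + 2 * (i0 - i) := by ring
  rw [this]
  exact dvd_add hd (Dvd.dvd.mul_left h3 2)

theorem exists_i0 (h : ℤ) (r : ℕ) (hr : 0 < r) (hodd : r % 2 = 1) :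
    ∃ i0 : ℕ, i0 < r ∧ (r : ℤ) ∣ h - 2 * (i0 : ℤ) := by
  have hr' : (0 : ℤ) < r := by exact_mod_cast hr
  refine ⟨((h * ((r + 1) / 2 : ℕ)) % (r : ℤ)).toNat, ?_, ?_⟩
  · have := Int.emod_lt_of_pos (h * ((r + 1) / 2 : ℕ)) hr'
    have := Int.emod_nonneg (h * ((r + 1) / 2 : ℕ)) hr'.ne'
    omega
  · rw [Int.toNat_of_nonneg (Int.emod_nonneg _ hr'.ne')]
    obtain ⟨t, ht⟩ : ∃ t, r = 2 * t + 1 := ⟨r / 2, by omega⟩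
    have e : (((r + 1) / 2 : ℕ) : ℤ) = t + 1 := by omega
    rw [e, Int.emod_def]
    refine ⟨-h + 2 * (h * (t + 1) / r), ?_⟩
    have : (r : ℤ) = 2 * t + 1 := by exact_mod_cast ht
    linear_combination h * this

theorem bracket (a b i l r : ℕ) (hr : 0 < r) (hodd : r % 2 = 1) (hil : i + l = a ∨ i + l = b) :
    i / r + l / r + (if ff a b r then 1 else 0) ≤ cnt (2 * a - 1) i r + cnt (2 * b + 1) l r := by
  split_ifs with hf
  · obtain ⟨f1, f2⟩ := hf
    obtain ⟨t, ht⟩ : ∃ t, r = 2 * t + 1 := ⟨r / 2, by omega⟩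
    have key : ∀ a : ℕ, (2 * a / r) % 2 = 1 → t + 1 ≤ a % r := by
      intro a ha
      by_contra hcon
      have h1 := Nat.div_add_mod a r
      have : 2 * a / r = 2 * (a / r) := by
        rw [Nat.div_eq_iff hr]
        have : 2 * (a / r) * r = 2 * (r * (a / r)) := by ring
        omega
      omega
    have ka := key a f1
    have kb := key b f2
    have la := Nat.mod_lt a hr
    have lb := Nat.mod_lt b hr
    have da : (r : ℤ) ∣ (a : ℤ) - (a % r : ℕ) := by
      push_cast; exact Int.dvd_self_sub_emod
    have db : (r : ℤ) ∣ (b : ℤ) - (b % r : ℕ) := by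
      push_cast; exact Int.dvd_self_sub_emod
    have hrt : (r : ℤ) = 2 * t + 1 := by exact_mod_cast ht
    have c1 := cnt_ge (2 * a - 1) i r (a % r - (t + 1)) hr (by omega) (by
      have : (2 * (a : ℤ) - 1) - 2 * ((a % r - (t + 1) : ℕ) : ℤ) = 2 * ((a : ℤ) - (a % r : ℕ)) + r := by
        rw [Nat.cast_sub ka, hrt]; push_cast; ring
      rw [this]
      exact dvd_add (Dvd.dvd.mul_left da 2) dvd_rfl)
    have c2 := cnt_ge (2 * b + 1) l r (b % r - t) hr (by omega) (by
      have : (2 * (b : ℤ) + 1) - 2 * ((b % r - t : ℕ) : ℤ) = 2 * ((b : ℤ) - (b % r : ℕ)) + r := by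
        rw [Nat.cast_sub (by omega), hrt]; push_cast; ring
      rw [this]
      exact dvd_add (Dvd.dvd.mul_left db 2) dvd_rfl)
    have li := Nat.mod_lt i hr
    have ll := Nat.mod_lt l hr
    have hs : (i + l) % r = if r ≤ i % r + l % r then i % r + l % r - r else i % r + l % r := by
      rw [Nat.add_mod]
      split_ifs with hh
      · rw [Nat.mod_eq_sub_mod hh, Nat.mod_eq_of_lt (by omega)]
      · exact Nat.mod_eq_of_lt (by omega)
    have : a % r - (t + 1) < i % r ∨ b % r - t < l % r := by
      rcases hil with hil | hil <;> rw [hil] at hs <;> split_ifs at hs <;> omega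
    rcases this with h | h
    · rw [if_pos h] at c1
      omega
    · rw [if_pos h] at c2
      omega
  · obtain ⟨i0, p1, p2⟩ := exists_i0 (2 * a - 1) r hr hodd
    obtain ⟨i1, p3, p4⟩ := exists_i0 (2 * b + 1) r hr hodd
    have c1 := cnt_ge _ i r i0 hr p1 p2
    have c2 := cnt_ge _ l r i1 hr p3 p4
    omega

theorem uu_ne (h : ℤ) (j : ℕ) (hh : h % 2 = 1) : uu h j ≠ 0 := by
  unfold uu
  refine Finset.prod_ne_zero_iff.mpr fun i _ => ?_
  omega

theorem uu_odd (h : ℤ) (j : ℕ) (hh : h % 2 = 1) : Odd (uu h j) := by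
  induction j with
  | zero => simp [uu]
  | succ j ih =>
    rw [uu_succ]
    refine ih.mul ?_
    rw [Int.odd_iff]; omega

theorem val_uu (h : ℤ) (hh : h % 2 = 1) (j p c : ℕ) (hp : p.Prime) :
    ∑ k ∈ Finset.Ico 1 c, cnt h j (p ^ k) ≤ (uu h j).natAbs.factorization p := by
  have e : (uu h j).natAbs = ∏ i ∈ Finset.range j, (h - 2 * (i : ℤ)).natAbs := by
    unfold uu
    exact map_prod Int.natAbsHom _ _
  rw [e, Nat.factorization_prod_apply (fun i _ => by omega)]
  have e2 : ∑ k ∈ Finset.Ico 1 c, cnt h j (p ^ k)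
      = ∑ i ∈ Finset.range j, ((Finset.Ico 1 c).filter (fun k => ((p ^ k : ℕ) : ℤ) ∣ h - 2 * (i : ℤ))).card := by
    unfold cnt
    simp only [Finset.card_filter]
    exact Finset.sum_comm
  rw [e2]
  refine Finset.sum_le_sum fun i _ => ?_
  have : ((Finset.Ico 1 c).filter (fun k => ((p ^ k : ℕ) : ℤ) ∣ h - 2 * (i : ℤ)))
      ⊆ Finset.Icc 1 ((h - 2 * (i : ℤ)).natAbs.factorization p) := by
    intro k
    simp only [Finset.mem_filter, Finset.mem_Ico, Finset.mem_Icc]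
    rintro ⟨h1, h2⟩
    refine ⟨h1.1, ?_⟩
    rw [← hp.pow_dvd_iff_le_factorization (by omega)]
    exact Int.natCast_dvd.mp h2
  simpa using Finset.card_le_card this

def ee (a b p : ℕ) : ℕ := ((Finset.Icc 1 (Nat.log p (2 * b))).filter (fun k => ff a b (p ^ k))).card

theorem val_main (a b i l p : ℕ) (hp : p.Prime) (hp2 : p ≠ 2) (hba : b ≤ a) (hil : i + l = a ∨ i + l = b) :
    i.factorial.factorization p + l.factorial.factorization p + ee a b p
     ≤ (uu (2 * a - 1) i).natAbs.factorization p + (uu (2 * b + 1) l).natAbs.factorization p := by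
  set c := Nat.log p (2 * a) + 1 with hc
  have hle : i ≤ 2 * a ∧ l ≤ 2 * a := by omega
  have l1 : Nat.log p i < c := Nat.lt_succ_of_le (Nat.log_mono_right hle.1)
  have l2 : Nat.log p l < c := Nat.lt_succ_of_le (Nat.log_mono_right hle.2)
  rw [Nat.factorization_factorial hp l1, Nat.factorization_factorial hp l2]
  have v1 := val_uu (2 * a - 1) (by omega) i p c hp
  have v2 := val_uu (2 * b + 1) (by omega) l p c hp
  have e3 : ee a b p ≤ ∑ k ∈ Finset.Ico 1 c, (if ff a b (p ^ k) then 1 else 0) := by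
    rw [← Finset.card_filter]
    unfold ee
    refine Finset.card_le_card (Finset.filter_subset_filter _ ?_)
    intro k
    simp only [Finset.mem_Icc, Finset.mem_Ico]
    rintro ⟨h1, h2⟩
    have : Nat.log p (2 * b) ≤ Nat.log p (2 * a) := Nat.log_mono_right (by omega)
    omega
  have : ∑ k ∈ Finset.Ico 1 c, (i / p ^ k + l / p ^ k + (if ff a b (p ^ k) then 1 else 0))
      ≤ ∑ k ∈ Finset.Ico 1 c, (cnt (2 * a - 1) i (p ^ k) + cnt (2 * b + 1) l (p ^ k)) := by
    refine Finset.sum_le_sum fun k _ => bracket a b i l (p ^ k) (pow_pos hp.pos k) ?_ hil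
    have : Odd (p ^ k) := (hp.odd_of_ne_two hp2).pow
    exact Nat.odd_iff.mp this
  rw [Finset.sum_add_distrib, Finset.sum_add_distrib, Finset.sum_add_distrib] at this
  omega

/-- the common content -/
def gg (a b : ℕ) : ℕ := ∏ p ∈ (Finset.Icc 1 (2 * b)).filter (fun p => p.Prime ∧ p ≠ 2), p ^ ee a b p

theorem content (a b i l : ℕ) (hba : b ≤ a) (hil : i + l = a ∨ i + l = b) :
    ∃ t : ℤ, 2 ^ (i + l) * uu (2 * a - 1) i * uu (2 * b + 1) l
      = (i.factorial : ℤ) * l.factorial * (gg a b * t) := by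
  set u1 := (uu (2 * a - 1) i).natAbs with hu1
  set u2 := (uu (2 * b + 1) l).natAbs with hu2
  have n1 : u1 ≠ 0 := by
    have := uu_ne (2 * a - 1) i (by omega); omega
  have n2 : u2 ≠ 0 := by
    have := uu_ne (2 * b + 1) l (by omega); omega
  have hd : i.factorial * l.factorial ∣ 2 ^ (i + l) * u1 * u2 := by
    rw [← Nat.factorization_le_iff_dvd (by positivity) (by positivity)]
    intro p
    by_cases hp : p.Prime
    swap
    · simp [Nat.factorization_eq_zero_of_not_prime, hp]
    rw [Nat.factorization_mul (by positivity) (by positivity),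
      Nat.factorization_mul (by positivity) (by positivity),
      Nat.factorization_mul (by positivity) (by positivity)]
    simp only [Finsupp.add_apply]
    by_cases hp2 : p = 2
    · subst hp2
      have h1 := Nat.factorization_factorial_le_div_pred hp i
      have h2 := Nat.factorization_factorial_le_div_pred hp l
      simp at h1 h2
      have h3 : (2 ^ (i + l)).factorization 2 = i + l := by
        rw [Nat.Prime.factorization_pow hp]; simp
      omega
    · have := val_main a b i l p hp hp2 hba hil
      rw [← hu1, ← hu2] at this
      omega
  obtain ⟨t, ht⟩ := hd
  have t0 : t ≠ 0 := by
    rintro rfl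
    have : 2 ^ (i + l) * u1 * u2 ≠ 0 := by positivity
    omega
  have hg : gg a b ∣ t := by
    unfold gg
    refine Finset.prod_dvd_of_isRelPrime ?_ ?_
    · intro p hp q hq hpq
      simp only [Finset.coe_filter, Set.mem_ofPred_eq] at hp hq
      refine Nat.coprime_iff_isRelPrime.mp ?_
      exact Nat.Coprime.pow _ _ ((Nat.coprime_primes hp.2.1 hq.2.1).mpr hpq)
    · intro p hp
      simp only [Finset.mem_filter] at hp
      obtain ⟨-, hp, hp2⟩ := hp
      rw [hp.pow_dvd_iff_le_factorization t0]
      have e := congrArg (fun n => n.factorization p) ht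
      rw [Nat.factorization_mul (by positivity) (by positivity),
        Nat.factorization_mul (by positivity) (by positivity),
        Nat.factorization_mul (by positivity) (by positivity),
        Nat.factorization_mul (by positivity) (by positivity)] at e
      simp only [Finsupp.add_apply] at e
      have h3 : (2 ^ (i + l)).factorization p = 0 := by
        rw [Nat.Prime.factorization_pow Nat.prime_two]
        simp [Finsupp.single_apply, Ne.symm hp2]
      have := val_main a b i l p hp hp2 hba hil
      rw [← hu1, ← hu2] at this
      omega
  obtain ⟨s, hs⟩ := hg
  have hsgn : ∃ ε : ℤ, uu (2 * a - 1) i * uu (2 * b + 1) l = ε * (u1 * u2) := by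
    have q1 := Int.sign_mul_natAbs (uu (2 * a - 1) i)
    have q2 := Int.sign_mul_natAbs (uu (2 * b + 1) l)
    refine ⟨Int.sign (uu (2 * a - 1) i) * Int.sign (uu (2 * b + 1) l), ?_⟩
    rw [hu1, hu2]
    conv_lhs => rw [← q1, ← q2]
    ring
  obtain ⟨ε, hε⟩ := hsgn
  refine ⟨ε * s, ?_⟩
  have ht' : (2 : ℤ) ^ (i + l) * u1 * u2 = (i.factorial : ℤ) * l.factorial * t := by exact_mod_cast ht
  have hs' : (t : ℤ) = gg a b * s := by exact_mod_cast hs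
  rw [mul_assoc, hε]
  linear_combination ε * ht' + ε * (i.factorial : ℤ) * l.factorial * hs'


theorem int_poly (h h' : ℤ) (n : ℕ) (g : ℤ) (t : ℕ → ℤ)
    (ht : ∀ j ≤ n, 2 ^ n * uu h j * uu h' (n - j) = (j.factorial : ℤ) * (n - j).factorial * (g * t j)) :
    (2 : ℝ) ^ (17 * n) * S0 h h' n (32761 / 32768)
      = ((g * ∑ j ∈ Finset.range (n + 1), t j * 32761 ^ j * 2 ^ (15 * (n - j)) : ℤ) : ℝ) := by
  unfold S0
  push_cast
  rw [Finset.mul_sum, Finset.mul_sum]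
  refine Finset.sum_congr rfl fun j hj => ?_
  have hj' : j ≤ n := by have := Finset.mem_range.mp hj; omega
  have h1 := ht j hj'
  have h2 : (2 : ℝ) ^ n * uu h j * uu h' (n - j) = (j.factorial : ℝ) * (n - j).factorial * (g * t j) := by
    exact_mod_cast h1
  unfold cf
  have e1 : (2 : ℝ) ^ (17 * n) = 2 ^ n * 2 ^ n * (2 ^ (15 * (n - j)) * 2 ^ (15 * j)) := by
    rw [← pow_add, ← pow_add, ← pow_add]; congr 1; omega
  have e2 : (32768 : ℝ) ^ j = 2 ^ (15 * j) := by rw [pow_mul]; norm_num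
  rw [div_pow, e2, e1]
  have p1 : (j.factorial : ℝ) ≠ 0 := by positivity
  have p2 : ((n - j).factorial : ℝ) ≠ 0 := by positivity
  have p3 : (2 : ℝ) ^ n ≠ 0 := by positivity
  have p4 : (2 : ℝ) ^ (15 * j) ≠ 0 := by positivity
  field_simp
  linear_combination h2

theorem int_poly_odd (h h' : ℤ) (hh : h % 2 = 1) (n : ℕ) (g : ℤ) (t : ℕ → ℤ)
    (ht : ∀ j ≤ n, 2 ^ n * uu h j * uu h' (n - j) = (j.factorial : ℤ) * (n - j).factorial * (g * t j)) :
    ∃ o : ℤ, Odd o ∧ (n.factorial : ℤ) * (g * ∑ j ∈ Finset.range (n + 1), t j * 32761 ^ j * 2 ^ (15 * (n - j)))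
      = 2 ^ n * o := by
  refine ⟨∑ j ∈ Finset.range (n + 1), (n.choose j : ℤ) * uu h j * uu h' (n - j) * 32761 ^ j * 2 ^ (15 * (n - j)), ?_, ?_⟩
  · rw [Finset.sum_range_succ]
    refine Even.add_odd ?_ ?_
    · refine Finset.even_sum _ fun j hj => ?_
      have hj' := Finset.mem_range.mp hj
      refine Even.mul_left ?_ _
      refine (Int.even_pow.mpr ⟨by decide, by omega⟩)
    · simp only [Nat.choose_self, Nat.sub_self]
      have h1 := uu_odd h n hh
      have : Odd ((32761 : ℤ) ^ n) := Odd.pow (by decide)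
      simpa [uu] using h1.mul this
  · rw [Finset.mul_sum, Finset.mul_sum, Finset.mul_sum]
    refine Finset.sum_congr rfl fun j hj => ?_
    have hj' : j ≤ n := by have := Finset.mem_range.mp hj; omega
    have h1 := ht j hj'
    have h2 : (n.factorial : ℤ) = n.choose j * j.factorial * (n - j).factorial := by
      exact_mod_cast (Nat.choose_mul_factorial_mul_factorial hj').symm
    rw [h2]
    linear_combination (-(n.choose j : ℤ) * 32761 ^ j * 2 ^ (15 * (n - j))) * h1

theorem pq_exists (a b : ℕ) (hba : b ≤ a) :
    ∃ p q o1 o2 : ℤ, (2 : ℝ) ^ (17 * a) * S0 (2 * b + 1) (2 * a - 1) a (32761 / 32768) = gg a b * p ∧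
      (2 : ℝ) ^ (17 * b) * S0 (2 * a - 1) (2 * b + 1) b (32761 / 32768) = gg a b * q ∧
      Odd o1 ∧ Odd o2 ∧ (a.factorial : ℤ) * (gg a b * p) = 2 ^ a * o1 ∧
      (b.factorial : ℤ) * (gg a b * q) = 2 ^ b * o2 := by
  have hP : ∀ j : ℕ, ∃ t : ℤ, j ≤ a → 2 ^ a * uu (2 * b + 1) j * uu (2 * a - 1) (a - j)
      = (j.factorial : ℤ) * (a - j).factorial * (gg a b * t) := by
    intro j
    by_cases hj : j ≤ a
    · obtain ⟨t, ht⟩ := content a b (a - j) j hba (Or.inl (by omega))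
      refine ⟨t, fun _ => ?_⟩
      rw [show a - j + j = a by omega] at ht
      linear_combination ht
    · exact ⟨0, fun h => absurd h hj⟩
  have hQ : ∀ j : ℕ, ∃ t : ℤ, j ≤ b → 2 ^ b * uu (2 * a - 1) j * uu (2 * b + 1) (b - j)
      = (j.factorial : ℤ) * (b - j).factorial * (gg a b * t) := by
    intro j
    by_cases hj : j ≤ b
    · obtain ⟨t, ht⟩ := content a b j (b - j) hba (Or.inr (by omega))
      refine ⟨t, fun _ => ?_⟩
      rw [show j + (b - j) = b by omega] at ht
      linear_combination ht
    · exact ⟨0, fun h => absurd h hj⟩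
  choose t ht using hP
  choose s hs using hQ
  obtain ⟨o1, h1, h2⟩ := int_poly_odd (2 * b + 1) (2 * a - 1) (by omega) a (gg a b) t ht
  obtain ⟨o2, h3, h4⟩ := int_poly_odd (2 * a - 1) (2 * b + 1) (by omega) b (gg a b) s hs
  have e1 := int_poly (2 * b + 1) (2 * a - 1) a (gg a b) t ht
  have e2 := int_poly (2 * a - 1) (2 * b + 1) b (gg a b) s hs
  refine ⟨_, _, o1, o2, ?_, ?_, h1, h3, h2, h4⟩
  · rw [e1, Int.cast_mul, Int.cast_natCast]
  · rw [e2, Int.cast_mul, Int.cast_natCast]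

theorem v2_factorial (b : ℕ) : b ≤ padicValNat 2 b.factorial + Nat.log 2 b + 1 := by
  rcases Nat.eq_zero_or_pos b with rfl | hb
  · simp
  have h := sub_one_mul_padicValNat_factorial (p := 2) b
  have h1 : (Nat.digits 2 b).sum ≤ (Nat.digits 2 b).length * 1 := by
    rw [← smul_eq_mul]
    refine List.sum_le_card_nsmul _ _ ?_
    intro x hx
    have := Nat.digits_lt_base (b := 2) (by norm_num) hx
    omega
  rw [Nat.length_digits 2 b (by norm_num) (by omega)] at h1
  omega

theorem nonvanish (a b d : ℕ) (X p q o1 o2 : ℤ) (hX : Odd X) (h1 : Odd o1) (h2 : Odd o2)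
    (ha0 : 0 < a)
    (ha : (a.factorial : ℤ) * p = 2 ^ a * o1) (hb : (b.factorial : ℤ) * q = 2 ^ b * o2)
    (hd : Nat.log 2 b ≤ d) : 256 * 2 ^ d * p - 181 * X * q ≠ 0 := by
  intro h
  have e : (2 : ℤ) ^ (8 + d + a) * b.factorial * o1 = (a.factorial : ℤ) * (2 ^ b * (181 * X * o2)) := by
    have : (256 : ℤ) = 2 ^ 8 := by norm_num
    rw [pow_add, pow_add, ← this]
    linear_combination (a.factorial * b.factorial : ℤ) * h - 256 * 2 ^ d * b.factorial * ha + 181 * X * a.factorial * hb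
  have hodd : Odd (181 * X * o2) := (Odd.mul (by decide) hX).mul h2
  have dv : (2 : ℤ) ^ (a + b) ∣ (a.factorial : ℤ) * (2 ^ b * (181 * X * o2)) := by
    rw [← e]
    have f1 : (2 : ℤ) ^ (padicValNat 2 b.factorial) ∣ b.factorial := by
      exact_mod_cast pow_padicValNat_dvd
    have f2 : (2 : ℤ) ^ (8 + d + a + padicValNat 2 b.factorial) ∣ 2 ^ (8 + d + a) * b.factorial := by
      rw [pow_add]; exact mul_dvd_mul_left _ f1
    refine Dvd.dvd.mul_right ((pow_dvd_pow _ ?_).trans f2) _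
    have := v2_factorial b
    omega
  have dv2 : (2 : ℤ) ^ a ∣ (a.factorial : ℤ) * (181 * X * o2) := by
    have : (a.factorial : ℤ) * (2 ^ b * (181 * X * o2)) = ((a.factorial : ℤ) * (181 * X * o2)) * 2 ^ b := by ring
    rw [this, pow_add] at dv
    exact Int.dvd_of_mul_dvd_mul_right (by positivity) dv
  have cop : IsCoprime ((2 : ℤ) ^ a) (181 * X * o2) := by
    refine IsCoprime.pow_left ?_
    exact Int.isCoprime_two_left.mpr hodd
  have dv3 : (2 : ℤ) ^ a ∣ a.factorial := cop.dvd_of_dvd_mul_right dv2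
  have dv4 : 2 ^ a ∣ a.factorial := by exact_mod_cast dv3
  have h5 : a ≤ padicValNat 2 a.factorial := (padicValNat_dvd_iff_le (Nat.factorial_ne_zero a)).mp dv4
  have h6 := sub_one_mul_padicValNat_factorial (p := 2) a
  have h7 : 0 < (Nat.digits 2 a).sum := by
    by_contra hh
    have : (Nat.digits 2 a).sum = 0 := by omega
    have h8 := Nat.ofDigits_digits 2 a
    have : ∀ x ∈ Nat.digits 2 a, x = 0 := by
      exact List.sum_eq_zero_iff.mp this
    have h9 : Nat.ofDigits 2 (Nat.digits 2 a) = 0 := by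
      have := List.eq_replicate_of_mem this
      rw [this]; simp [Nat.ofDigits_replicate_zero]
    omega
  omega

theorem sqrt_w0 : 256 * √(32761 / 32768 : ℝ) = 181 * √2 := by
  have h : (√(32761 / 32768 : ℝ)) = 181 * √2 / 256 := by
    rw [Real.sqrt_eq_iff_mul_self_eq (by norm_num) (by positivity)]
    have := Real.mul_self_sqrt (show (0 : ℝ) ≤ 2 by norm_num)
    nlinarith
  rw [h]; ring

theorem main_ineq (a b d : ℕ) (ha0 : 0 < a) (hba : b ≤ a) (hd : Nat.log 2 b ≤ d) (X : ℕ) (hX : Odd X) :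
    (gg a b : ℝ) ≤ 181 * |(X : ℝ) - 2 ^ (d + 17 * (a - b)) * √2| *
        (2 ^ (17 * b) * S0 (2 * a - 1) (2 * b + 1) b (32761 / 32768))
      + 256 * 2 ^ d * 2 ^ (17 * a) * |S0 (2 * b + 1) (2 * a - 1) a (32761 / 32768)
          - √(32761 / 32768) * S0 (2 * a - 1) (2 * b + 1) b (32761 / 32768)| := by
  obtain ⟨p, q, o1, o2, hp, hq, h1, h2, h3, h4⟩ := pq_exists a b hba
  have hX' : Odd (X : ℤ) := by exact_mod_cast hX
  have nv := nonvanish a b d X _ _ o1 o2 hX' h1 h2 ha0 h3 h4 hd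
  have hlow : (gg a b : ℤ) ≤ |256 * 2 ^ d * (gg a b * p) - 181 * X * (gg a b * q)| := by
    refine Int.le_of_dvd (abs_pos.mpr nv) ?_
    rw [dvd_abs]
    exact ⟨256 * 2 ^ d * p - 181 * X * q, by ring⟩
  have hlow' : (gg a b : ℝ) ≤ |256 * 2 ^ d * ((gg a b : ℝ) * p) - 181 * (X : ℝ) * ((gg a b : ℝ) * q)| := by
    exact_mod_cast hlow
  refine hlow'.trans ?_
  rw [← hp, ← hq]
  set P := S0 (2 * b + 1) (2 * a - 1) a (32761 / 32768)
  set Q := S0 (2 * a - 1) (2 * b + 1) b (32761 / 32768) with hQ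
  have hQ0 : 0 ≤ Q := by
    have := Q_lower a b hba (32761 / 32768) (by norm_num) (by norm_num)
    exact le_trans (by positivity) this
  have e : (256 * 2 ^ d * (2 ^ (17 * a) * P) - 181 * X * (2 ^ (17 * b) * Q) : ℝ)
      = (-(181 * (X - 2 ^ (d + 17 * (a - b)) * √2) * (2 ^ (17 * b) * Q)))
        + 256 * 2 ^ d * 2 ^ (17 * a) * (P - √(32761 / 32768) * Q) := by
    have e1 : (2 : ℝ) ^ (17 * a) = 2 ^ (17 * (a - b)) * 2 ^ (17 * b) := by
      rw [← pow_add]; congr 1; omega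
    rw [e1, pow_add]
    linear_combination (2 ^ d * (2 ^ (17 * (a - b)) * 2 ^ (17 * b)) * Q) * sqrt_w0
  rw [e]
  refine (abs_add_le _ _).trans ?_
  rw [abs_neg, abs_mul, abs_mul, abs_mul (256 * 2 ^ d * 2 ^ (17 * a) : ℝ)]
  rw [abs_of_nonneg (show (0 : ℝ) ≤ 181 by norm_num), abs_of_nonneg (show (0 : ℝ) ≤ 2 ^ (17 * b) * Q by positivity),
    abs_of_nonneg (show (0 : ℝ) ≤ 256 * 2 ^ d * 2 ^ (17 * a) by positivity)]

open ArithmeticFunction in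
theorem sum_vM_floor (n : ℕ) : ∑ r ∈ Finset.Icc 1 n, vonMangoldt r * ((n / r : ℕ) : ℝ) = Real.log n.factorial := by
  induction n with
  | zero => simp
  | succ n ih =>
    rw [Nat.factorial_succ, Nat.cast_mul, Real.log_mul (by positivity) (by positivity), ← ih, ← vonMangoldt_sum]
    have h1 : ∑ r ∈ Finset.Icc 1 n, vonMangoldt r * ((n / r : ℕ) : ℝ) = ∑ r ∈ Finset.Icc 1 (n + 1), vonMangoldt r * ((n / r : ℕ) : ℝ) := by
      rw [Finset.sum_Icc_succ_top (by omega)]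
      simp
    have h2 : ∑ i ∈ (n + 1).divisors, vonMangoldt i = ∑ r ∈ Finset.Icc 1 (n + 1), vonMangoldt r * (if r ∣ n + 1 then 1 else 0) := by
      simp only [mul_ite, mul_one, mul_zero]
      rw [← Finset.sum_filter]
      refine Finset.sum_congr ?_ fun _ _ => rfl
      ext r
      simp only [Nat.mem_divisors, Finset.mem_filter, Finset.mem_Icc]
      constructor
      · rintro ⟨h, _⟩
        exact ⟨⟨Nat.pos_of_dvd_of_pos h (by omega), Nat.le_of_dvd (by omega) h⟩, h⟩
      · rintro ⟨_, h⟩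
        exact ⟨h, by omega⟩
    rw [h1, h2, ← Finset.sum_add_distrib]
    refine Finset.sum_congr rfl fun r _ => ?_
    rw [Nat.succ_div]
    split_ifs <;> push_cast <;> ring

open ArithmeticFunction in
theorem sum_vM_floor_ge (n N : ℕ) (h : n ≤ N) :
    ∑ r ∈ Finset.Icc 1 N, vonMangoldt r * ((n / r : ℕ) : ℝ) = Real.log n.factorial := by
  rw [← sum_vM_floor]
  symm
  refine Finset.sum_subset (Finset.Icc_subset_Icc_right h) ?_
  intro r hr hr'
  rw [Finset.mem_Icc] at hr hr'
  rw [Nat.div_eq_of_lt (by omega)]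
  simp

open ArithmeticFunction in
theorem log_gg (a b : ℕ) (hb : 0 < b) :
    ∑ r ∈ Finset.Icc 1 (2 * b), (if ff a b r then vonMangoldt r else 0) ≤ Real.log (gg a b) + Real.log (2 * b) := by
  classical
  have e1 : ∑ r ∈ Finset.Icc 1 (2 * b), (if ff a b r then vonMangoldt r else 0)
      = ∑ r ∈ (Finset.Icc 1 (2 * b)).filter (fun r => IsPrimePow r ∧ ff a b r), Real.log r.minFac := by
    rw [Finset.sum_filter]
    refine Finset.sum_congr rfl fun r _ => ?_
    rw [vonMangoldt_apply]
    by_cases h1 : IsPrimePow r <;> by_cases h2 : ff a b r <;> simp [h1, h2]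
  rw [e1, ← Finset.sum_fiberwise_of_maps_to (t := (Finset.Icc 1 (2 * b)).filter Nat.Prime) (g := Nat.minFac)]
  swap
  · intro r hr
    simp only [Finset.mem_filter, Finset.mem_Icc] at hr ⊢
    have : r ≠ 1 := hr.2.1.ne_one
    exact ⟨⟨Nat.minFac_pos r, (Nat.minFac_le (by omega)).trans hr.1.2⟩, Nat.minFac_prime this⟩
  have key : ∀ p ∈ (Finset.Icc 1 (2 * b)).filter Nat.Prime,
      ∑ r ∈ ((Finset.Icc 1 (2 * b)).filter (fun r => IsPrimePow r ∧ ff a b r)).filter (fun r => r.minFac = p), Real.log r.minFac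
        ≤ (ee a b p : ℝ) * Real.log p := by
    intro p hp
    have hpp := (Finset.mem_filter.mp hp).2
    have hl : 0 ≤ Real.log p := Real.log_nonneg (by exact_mod_cast hpp.one_lt.le)
    rw [Finset.sum_congr rfl (g := fun _ => Real.log p)
      (fun r hr => by rw [(Finset.mem_filter.mp hr).2]), Finset.sum_const, nsmul_eq_mul]
    refine mul_le_mul_of_nonneg_right ?_ hl
    have := Finset.card_le_card_of_injOn (s := ((Finset.Icc 1 (2 * b)).filter (fun r => IsPrimePow r ∧ ff a b r)).filter (fun r => r.minFac = p))
      (t := (Finset.Icc 1 (Nat.log p (2 * b))).filter (fun k => ff a b (p ^ k))) (fun r => Nat.log p r) ?_ ?_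
    · unfold ee; exact_mod_cast this
    · intro r hr
      have hr := Finset.mem_coe.mp hr
      simp only [Finset.mem_filter, Finset.mem_Icc] at hr
      obtain ⟨⟨⟨h1, h2⟩, h3, h4⟩, h5⟩ := hr
      obtain ⟨q, k, hq, hk, rfl⟩ := h3
      have hq' := hq.nat_prime
      rw [Nat.Prime.pow_minFac hq' (by omega)] at h5
      subst h5
      refine Finset.mem_coe.mpr ?_
      simp only [Finset.mem_filter, Finset.mem_Icc, Nat.log_pow hq'.one_lt]
      exact ⟨⟨hk, Nat.le_log_of_pow_le hq'.one_lt h2⟩, h4⟩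
    · intro r hr s hs hrs
      have hr := Finset.mem_coe.mp hr
      have hs := Finset.mem_coe.mp hs
      simp only [Finset.mem_filter, Finset.mem_Icc] at hr hs
      obtain ⟨⟨_, h3, _⟩, h5⟩ := hr
      obtain ⟨⟨_, h3', _⟩, h5'⟩ := hs
      obtain ⟨q, k, hq, hk, rfl⟩ := h3
      obtain ⟨q', k', hq', hk', rfl⟩ := h3'
      rw [Nat.Prime.pow_minFac hq.nat_prime (by omega)] at h5
      rw [Nat.Prime.pow_minFac hq'.nat_prime (by omega)] at h5'
      subst h5
      subst h5'
      simp only [Nat.log_pow hpp.one_lt] at hrs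
      rw [hrs]
  refine (Finset.sum_le_sum key).trans ?_
  have hgg : Real.log (gg a b) = ∑ p ∈ (Finset.Icc 1 (2 * b)).filter (fun p => p.Prime ∧ p ≠ 2), (ee a b p : ℝ) * Real.log p := by
    unfold gg
    push_cast
    rw [Real.log_prod]
    · simp only [Real.log_pow]
    · intro p hp
      have := (Finset.mem_filter.mp hp).2.1.pos
      positivity
  have hsplit : (Finset.Icc 1 (2 * b)).filter Nat.Prime = insert 2 ((Finset.Icc 1 (2 * b)).filter (fun p => p.Prime ∧ p ≠ 2)) := by
    ext p
    simp only [Finset.mem_filter, Finset.mem_Icc, Finset.mem_insert]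
    constructor
    · rintro ⟨h, h'⟩
      by_cases h2 : p = 2
      · exact Or.inl h2
      · exact Or.inr ⟨h, h', h2⟩
    · rintro (h | h)
      · subst h; exact ⟨by omega, Nat.prime_two⟩
      · exact ⟨h.1, h.2.1⟩
  rw [hsplit, Finset.sum_insert (by simp), ← hgg, add_comm]
  refine add_le_add le_rfl ?_
  have h2 : ee a b 2 ≤ Nat.log 2 (2 * b) := by
    unfold ee
    refine (Finset.card_filter_le _ _).trans ?_
    simp
  have h3 : (2 : ℝ) ^ (ee a b 2) ≤ 2 * b := by
    calc (2 : ℝ) ^ (ee a b 2) ≤ 2 ^ (Nat.log 2 (2 * b)) := pow_le_pow_right₀ (by norm_num) h2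
      _ ≤ 2 * b := by exact_mod_cast Nat.pow_log_le_self 2 (by omega)
  rw [show ((2 : ℕ) : ℝ) = 2 by norm_num, ← Real.log_pow]
  exact Real.log_le_log (by positivity) h3

def fw (w : ℕ) : Prop := (w / 17) % 2 = 1 ∧ (w / 5) % 2 = 1

instance (w : ℕ) : Decidable (fw w) := by unfold fw; infer_instance

open ArithmeticFunction in
theorem transfer (K : ℕ) (hK : 0 < K) (I : List (ℕ × ℤ)) (V : ℕ) (Ek : List (ℕ × ℕ)) (hE : ∀ x ∈ Ek, 0 < x.1)
    (h : ∀ w : ℕ, (I.map fun x => x.2 * x.1 * ((w / x.1 : ℕ) : ℤ)).sum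
      ≤ V * (if fw w then 1 else 0) + (Ek.map fun x => if x.1 ≤ w then (x.2 : ℤ) else 0).sum) :
    (I.map fun x => (x.2 : ℝ) * x.1 * Real.log (170 * K / x.1 : ℕ).factorial).sum
      ≤ V * (Real.log (gg (17 * K) (5 * K)) + Real.log (10 * K))
        + (Ek.map fun x => (x.2 : ℝ) * Chebyshev.psi ((170 * K / x.1 : ℕ) : ℝ)).sum := by
  have eL : (I.map fun x => (x.2 : ℝ) * x.1 * Real.log (170 * K / x.1 : ℕ).factorial).sum
      = ∑ r ∈ Finset.Icc 1 (170 * K), vonMangoldt r * (((I.map fun x => x.2 * x.1 * ((170 * K / r / x.1 : ℕ) : ℤ)).sum : ℤ) : ℝ) := by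
    clear h
    induction I with
    | nil => simp
    | cons x I ih =>
      simp only [List.map_cons, List.sum_cons, Int.cast_add, mul_add, Finset.sum_add_distrib]
      rw [ih]
      congr 1
      rw [← sum_vM_floor_ge (170 * K / x.1) (170 * K) (Nat.div_le_self _ _), Finset.mul_sum]
      refine Finset.sum_congr rfl fun r _ => ?_
      rw [Nat.div_div_eq_div_mul, Nat.div_div_eq_div_mul, mul_comm r, Int.cast_mul, Int.cast_mul, Int.cast_natCast, Int.cast_natCast]
      ring
  have eR : (Ek.map fun x => (x.2 : ℝ) * Chebyshev.psi ((170 * K / x.1 : ℕ) : ℝ)).sum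
      = ∑ r ∈ Finset.Icc 1 (170 * K), vonMangoldt r * (((Ek.map fun x => if x.1 ≤ 170 * K / r then (x.2 : ℤ) else 0).sum : ℤ) : ℝ) := by
    clear h
    induction Ek with
    | nil => simp
    | cons x I ih =>
      simp only [List.map_cons, List.sum_cons, Int.cast_add, mul_add, Finset.sum_add_distrib]
      rw [ih (fun y hy => hE y (List.mem_cons_of_mem _ hy))]
      congr 1
      have hx := hE x (List.mem_cons_self)
      unfold Chebyshev.psi
      rw [Nat.floor_natCast, Finset.mul_sum]
      have : ∀ r ∈ Finset.Icc 1 (170 * K), vonMangoldt r * (((if x.1 ≤ 170 * K / r then (x.2 : ℤ) else 0 : ℤ)) : ℝ)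
          = if r ≤ 170 * K / x.1 then (x.2 : ℝ) * vonMangoldt r else 0 := by
        intro r hr
        have hr := (Finset.mem_Icc.mp hr).1
        have : x.1 ≤ 170 * K / r ↔ r ≤ 170 * K / x.1 := by
          rw [Nat.le_div_iff_mul_le (by omega), Nat.le_div_iff_mul_le hx, mul_comm]
        simp only [this]
        split_ifs <;> simp [mul_comm]
      rw [Finset.sum_congr rfl this, ← Finset.sum_filter]
      refine Finset.sum_congr ?_ fun _ _ => rfl
      ext r
      simp only [Finset.mem_Ioc, Finset.mem_filter, Finset.mem_Icc]
      have := Nat.div_le_self (170 * K) x.1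
      omega
  have eG : ∑ r ∈ Finset.Icc 1 (170 * K), vonMangoldt r * (if fw (170 * K / r) then 1 else 0)
      ≤ Real.log (gg (17 * K) (5 * K)) + Real.log (10 * K) := by
    have := log_gg (17 * K) (5 * K) (by omega)
    have e : (2 : ℝ) * ((5 * K : ℕ) : ℝ) = 10 * K := by push_cast; ring
    rw [e] at this
    refine le_trans (le_of_eq ?_) this
    symm
    have h2 : ∀ r ∈ Finset.Icc 1 (170 * K), vonMangoldt r * (if fw (170 * K / r) then 1 else 0)
        = if ff (17 * K) (5 * K) r then vonMangoldt r else 0 := by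
      intro r _
      have : fw (170 * K / r) ↔ ff (17 * K) (5 * K) r := by
        unfold fw ff
        rw [Nat.div_div_eq_div_mul, Nat.div_div_eq_div_mul, mul_comm r, mul_comm r, ← Nat.div_div_eq_div_mul,
          ← Nat.div_div_eq_div_mul, show 170 * K / 17 = 2 * (5 * K) by omega, show 170 * K / 5 = 2 * (17 * K) by omega]
        exact and_comm
      simp only [this, mul_ite, mul_one, mul_zero]
    rw [Finset.sum_congr rfl h2]
    refine Finset.sum_subset (Finset.Icc_subset_Icc_right (by omega)) ?_
    intro r hr hr'
    rw [Finset.mem_Icc] at hr hr'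
    have : ¬ ff (17 * K) (5 * K) r := by
      unfold ff
      rw [Nat.div_eq_of_lt (show 2 * (5 * K) < r by omega)]
      omega
    simp [this]
  rw [eL, eR]
  refine le_trans ?_ (add_le_add (mul_le_mul_of_nonneg_left eG (Nat.cast_nonneg V)) le_rfl)
  rw [Finset.mul_sum, ← Finset.sum_add_distrib]
  refine Finset.sum_le_sum fun r _ => ?_
  have h1 := h (170 * K / r)
  have h2 : (((I.map fun x => x.2 * x.1 * ((170 * K / r / x.1 : ℕ) : ℤ)).sum : ℤ) : ℝ)
      ≤ V * (if fw (170 * K / r) then 1 else 0) + (((Ek.map fun x => if x.1 ≤ 170 * K / r then (x.2 : ℤ) else 0).sum : ℤ) : ℝ) := by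
    exact_mod_cast h1
  have := mul_le_mul_of_nonneg_left h2 (vonMangoldt_nonneg (n := r))
  linarith

theorem stl_upper (x : ℝ) (hx : 1 ≤ x) :
    Real.log (⌊x⌋₊.factorial) ≤ x * Real.log x - x + Real.log x / 2 + 1 := by
  set n := ⌊x⌋₊ with hn
  have hn1 : 1 ≤ n := Nat.le_floor (by simpa using hx)
  have hnx : (n : ℝ) ≤ x := Nat.floor_le (by linarith)
  have hn0 : (1 : ℝ) ≤ n := by exact_mod_cast hn1
  have h1 : Real.log (Stirling.stirlingSeq n) ≤ 1 - Real.log 2 / 2 := by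
    obtain ⟨k, hk⟩ : ∃ k, n = k + 1 := ⟨n - 1, by omega⟩
    have h2 := Stirling.stirlingSeq'_antitone (Nat.zero_le k)
    simp only [Function.comp, Nat.succ_eq_add_one, zero_add, Stirling.stirlingSeq_one] at h2
    rw [hk]
    refine (Real.log_le_log (Stirling.stirlingSeq'_pos k) h2).trans ?_
    rw [Real.log_div (by positivity) (by positivity), Real.log_exp, Real.log_sqrt (by norm_num)]
  rw [Stirling.log_stirlingSeq_formula, Real.log_mul (by norm_num) (by positivity),
    Real.log_div (by positivity) (by positivity), Real.log_exp] at h1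
  have h3 : Real.log n ≤ Real.log x := Real.log_le_log (by positivity) hnx
  have h4 : Real.log (n / x) ≤ n / x - 1 := Real.log_le_sub_one_of_pos (by positivity)
  rw [Real.log_div (by positivity) (by positivity)] at h4
  have h5 : x * (Real.log n - Real.log x) ≤ n - x := by
    have := mul_le_mul_of_nonneg_left h4 (show 0 ≤ x by linarith)
    have e : x * (n / x - 1) = n - x := by field_simp
    linarith
  have h6 : 0 ≤ Real.log n := Real.log_nonneg hn0
  nlinarith

theorem stl_lower (x : ℝ) (hx : 1 ≤ x) :
    x * Real.log x - x - Real.log x / 2 ≤ Real.log (⌊x⌋₊.factorial) := by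
  set n := ⌊x⌋₊ with hn
  have hn1 : 1 ≤ n := Nat.le_floor (by simpa using hx)
  have hnx : (n : ℝ) ≤ x := Nat.floor_le (by linarith)
  have hnx' : x < n + 1 := Nat.lt_floor_add_one x
  have hn0 : (1 : ℝ) ≤ n := by exact_mod_cast hn1
  have h1 := Stirling.le_log_factorial_stirling (n := n) (by omega)
  have h2 : Real.log 2 ≤ Real.log (2 * Real.pi) := Real.log_le_log (by norm_num) (by linarith [Real.pi_gt_three])
  have h3 : Real.log x ≤ Real.log 2 + Real.log n := by
    rw [← Real.log_mul (by norm_num) (by positivity)]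
    exact Real.log_le_log (by positivity) (by linarith)
  have h4 : Real.log (x / n) ≤ x / n - 1 := Real.log_le_sub_one_of_pos (by positivity)
  rw [Real.log_div (by positivity) (by positivity)] at h4
  have h5 : n * (Real.log x - Real.log n) ≤ x - n := by
    have := mul_le_mul_of_nonneg_left h4 (show (0 : ℝ) ≤ n by linarith)
    have e : n * (x / n - 1) = x - n := by field_simp
    linarith
  have h6 : 0 ≤ Real.log x := Real.log_nonneg hx
  nlinarith

/-- lower bound for powers of e through rational numbers -/
theorem log_le_of_pow (x : ℝ) (hx : 0 < x) (p q : ℕ) (hq : 0 < q)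
    (h : x ^ q ≤ (2.7182818283 : ℝ) ^ p) : Real.log x ≤ p / q := by
  have h1 : x ^ q ≤ Real.exp p := by
    refine h.trans ?_
    rw [← mul_one (p : ℝ), Real.exp_nat_mul]
    exact pow_le_pow_left₀ (by norm_num) Real.exp_one_gt_d9.le _
  have h2 := Real.log_le_log (by positivity) h1
  rw [Real.log_exp, Real.log_pow] at h2
  rw [le_div_iff₀ (by positivity)]
  linarith

theorem le_log_of_pow (x : ℝ) (hx : 0 < x) (p q : ℕ) (hq : 0 < q)
    (h : (2.7182818286 : ℝ) ^ p ≤ x ^ q) : (p / q : ℝ) ≤ Real.log x := by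
  have h1 : Real.exp p ≤ x ^ q := by
    refine le_trans ?_ h
    rw [← mul_one (p : ℝ), Real.exp_nat_mul]
    exact pow_le_pow_left₀ (by positivity) Real.exp_one_lt_d9.le _
  have h2 := Real.log_le_log (by positivity) h1
  rw [Real.log_exp, Real.log_pow] at h2
  rw [div_le_iff₀ (by positivity)]
  linarith

def lcmchk : ℕ → ℕ → ℕ → ℕ → ℕ → Bool
  | 0, _, _, _, _ => true
  | f + 1, n, l, a, b => Nat.ble (l * a) b && lcmchk f (n + 1) (Nat.lcm l (n + 1)) (a * 1000) (b * 3064)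

theorem lcmUpto_succ' (n : ℕ) : Nat.lcmUpto (n + 1) = Nat.lcm (Nat.lcmUpto n) (n + 1) := by
  unfold Nat.lcmUpto
  rw [← Finset.insert_Icc_right_eq_Icc_add_one (by omega), Finset.lcm_insert]
  exact Nat.lcm_comm _ _

theorem lcmchk_ok (f n : ℕ) (h : lcmchk f n (Nat.lcmUpto n) (1000 ^ n) (3064 ^ n) = true) :
    ∀ m, n ≤ m → m < n + f → Nat.lcmUpto m * 1000 ^ m ≤ 3064 ^ m := by
  induction f generalizing n with
  | zero => intro m h1 h2; omega
  | succ f ih =>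
    intro m h1 h2
    rw [lcmchk, Bool.and_eq_true] at h
    rcases Nat.eq_or_lt_of_le h1 with rfl | h3
    · exact Nat.le_of_ble_eq_true h.1
    · refine ih (n + 1) ?_ m h3 (by omega)
      rw [lcmUpto_succ', pow_succ, pow_succ]
      exact h.2

theorem lcm_small (m : ℕ) (hm : m < 1600) : Nat.lcmUpto m * 1000 ^ m ≤ 3064 ^ m := by
  refine lcmchk_ok 1600 0 ?_ m (by omega) (by omega)
  have : Nat.lcmUpto 0 = 1 := by simp [Nat.lcmUpto]
  rw [this, pow_zero, pow_zero]
  decide +kernel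

theorem psi_small (m : ℕ) (hm : m < 1600) : Chebyshev.psi m ≤ 1.12 * m := by
  have h : ((Nat.lcmUpto m * 1000 ^ m : ℕ) : ℝ) ≤ ((3064 ^ m : ℕ) : ℝ) := by exact_mod_cast lcm_small m hm
  rw [Chebyshev.psi_eq_log_lcmUpto]
  have hp : (0 : ℝ) < Nat.lcmUpto m := by exact_mod_cast Nat.lcmUpto_pos m
  have h1 : (Nat.lcmUpto m : ℝ) ≤ (3064 / 1000) ^ m := by
    rw [div_pow, le_div_iff₀ (by positivity)]
    exact_mod_cast h
  have h2 := Real.log_le_log hp h1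
  rw [Real.log_pow] at h2
  have h3 := log_le_of_pow (3064 / 1000) (by norm_num) 28 25 (by norm_num) (by norm_num)
  have : (m : ℝ) * Real.log (3064 / 1000) ≤ m * ((28 : ℕ) / (25 : ℕ)) := mul_le_mul_of_nonneg_left h3 (by positivity)
  norm_num at this
  norm_num
  linarith

open ArithmeticFunction in
theorem psi_step (n : ℕ) :
    Chebyshev.psi n ≤ Chebyshev.psi ((n / 6 : ℕ) : ℝ) + (Real.log n.factorial - Real.log (n / 2).factorial
      - Real.log (n / 3).factorial - Real.log (n / 5).factorial + Real.log (n / 30).factorial) := by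
  have e6 : Chebyshev.psi ((n / 6 : ℕ) : ℝ) = ∑ r ∈ Finset.Icc 1 n, if 6 ≤ n / r then vonMangoldt r else 0 := by
    unfold Chebyshev.psi
    rw [Nat.floor_natCast, ← Finset.sum_filter]
    refine Finset.sum_congr ?_ fun _ _ => rfl
    ext r
    simp only [Finset.mem_Ioc, Finset.mem_filter, Finset.mem_Icc]
    constructor
    · rintro ⟨h1, h2⟩
      have := Nat.div_le_self n 6
      refine ⟨by omega, ?_⟩
      rw [Nat.le_div_iff_mul_le h1]
      rw [Nat.le_div_iff_mul_le (by norm_num)] at h2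
      linarith
    · rintro ⟨h1, h2⟩
      rw [Nat.le_div_iff_mul_le h1.1] at h2
      rw [Nat.le_div_iff_mul_le (by norm_num)]
      exact ⟨h1.1, by linarith⟩
  have e1 : Chebyshev.psi (n : ℝ) = ∑ r ∈ Finset.Icc 1 n, vonMangoldt r := by
    unfold Chebyshev.psi
    rw [Nat.floor_natCast]
    rfl
  rw [e6, e1, ← sum_vM_floor n, ← sum_vM_floor_ge (n / 2) n (Nat.div_le_self _ _),
    ← sum_vM_floor_ge (n / 3) n (Nat.div_le_self _ _), ← sum_vM_floor_ge (n / 5) n (Nat.div_le_self _ _),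
    ← sum_vM_floor_ge (n / 30) n (Nat.div_le_self _ _), ← Finset.sum_sub_distrib, ← Finset.sum_sub_distrib,
    ← Finset.sum_sub_distrib, ← Finset.sum_add_distrib, ← Finset.sum_add_distrib]
  refine Finset.sum_le_sum fun r hr => ?_
  have hr := Finset.mem_Icc.mp hr
  have hw : 1 ≤ n / r := Nat.div_pos hr.2 hr.1
  have hc : ∀ c, n / c / r = n / r / c := fun c => by
    rw [Nat.div_div_eq_div_mul, Nat.div_div_eq_div_mul, mul_comm]
  rw [hc 2, hc 3, hc 5, hc 30]
  generalize n / r = w at hw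
  have hL := vonMangoldt_nonneg (n := r)
  by_cases h6 : 6 ≤ w
  · have : w / 2 + w / 3 + w / 5 ≤ w + w / 30 := by omega
    have h' : ((w / 2 : ℕ) : ℝ) + ((w / 3 : ℕ) : ℝ) + ((w / 5 : ℕ) : ℝ) ≤ (w : ℝ) + ((w / 30 : ℕ) : ℝ) := by exact_mod_cast this
    rw [if_pos h6]
    nlinarith
  · have : w / 2 + w / 3 + w / 5 + 1 ≤ w + w / 30 := by omega
    have h' : ((w / 2 : ℕ) : ℝ) + ((w / 3 : ℕ) : ℝ) + ((w / 5 : ℕ) : ℝ) + 1 ≤ (w : ℝ) + ((w / 30 : ℕ) : ℝ) := by exact_mod_cast this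
    rw [if_neg h6]
    nlinarith

set_option exponentiation.threshold 3000 in
theorem psi_bound (n : ℕ) : Chebyshev.psi n ≤ 1.12 * n := by
  induction n using Nat.strong_induction_on with
  | _ n ih =>
    rcases Nat.lt_or_ge n 1600 with h | h
    · exact psi_small n h
    have hn : (1600 : ℝ) ≤ n := by exact_mod_cast h
    have h1 := psi_step n
    have h2 := ih (n / 6) (by omega)
    have h3 : ((n / 6 : ℕ) : ℝ) ≤ n / 6 := Nat.cast_div_le
    have fl : ∀ c : ℕ, ⌊(n : ℝ) / (c : ℝ)⌋₊ = n / c := fun c => Nat.floor_div_eq_div n c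
    have u1 := stl_upper n (by linarith)
    have u30 := stl_upper (n / (30 : ℕ)) (by push_cast; linarith)
    have l2 := stl_lower (n / (2 : ℕ)) (by push_cast; linarith)
    have l3 := stl_lower (n / (3 : ℕ)) (by push_cast; linarith)
    have l5 := stl_lower (n / (5 : ℕ)) (by push_cast; linarith)
    rw [Nat.floor_natCast] at u1
    rw [fl] at u30 l2 l3 l5
    push_cast at u30 l2 l3 l5
    rw [Real.log_div (by positivity) (by norm_num)] at u30 l2 l3 l5
    have e30 : Real.log 30 = Real.log 2 + Real.log 3 + Real.log 5 := by
      rw [← Real.log_mul (by norm_num) (by norm_num), ← Real.log_mul (by norm_num) (by norm_num)]; norm_num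
    have A : 14 * Real.log 2 + 9 * Real.log 3 + 5 * Real.log 5 ≤ 27.64 := by
      have := log_le_of_pow (2 ^ 14 * 3 ^ 9 * 5 ^ 5) (by norm_num) 691 25 (by norm_num) (by norm_num)
      rw [Real.log_mul (by norm_num) (by norm_num), Real.log_mul (by norm_num) (by norm_num),
        Real.log_pow, Real.log_pow, Real.log_pow] at this
      norm_num at this ⊢
      linarith
    have hl : Real.log n ≤ 7.38 + (n / 1600 - 1) := by
      have a := log_le_of_pow 1600 (by norm_num) 369 50 (by norm_num) (by norm_num)
      have b := Real.log_le_sub_one_of_pos (show (0 : ℝ) < n / 1600 by positivity)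
      rw [Real.log_div (by positivity) (by norm_num)] at b
      norm_num at a ⊢
      linarith
    have p2 : 0 ≤ Real.log 2 := Real.log_nonneg (by norm_num)
    have p3 : 1 ≤ Real.log 3 := by
      rw [Real.le_log_iff_exp_le (by norm_num)]; linarith [Real.exp_one_lt_d9]
    have p5 : 1 ≤ Real.log 5 := by
      rw [Real.le_log_iff_exp_le (by norm_num)]; linarith [Real.exp_one_lt_d9]
    rw [e30] at u30
    have A' := mul_le_mul_of_nonneg_left A (show (0 : ℝ) ≤ n by positivity)
    norm_num at hl h2 A' ⊢
    linarith


/-- evaluate the argument first -/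
def frc {α : Type} (x : ℕ) (k : ℕ → α) : α := Nat.casesOn (motive := fun _ => α) x (k 0) (fun n => k (n + 1))

theorem frc_eq {α : Type} (x : ℕ) (k : ℕ → α) : frc x k = k x := by cases x <;> rfl

def pks (f : ℕ → ℕ) (n : ℕ) : ℕ := ∑ i ∈ Finset.range n, f i * 2 ^ (40 * i)

theorem pks_split (f : ℕ → ℕ) (m n : ℕ) : pks f (m + n) = pks f m + 2 ^ (40 * m) * pks (fun i => f (m + i)) n := by
  unfold pks
  rw [Finset.sum_range_add, Finset.mul_sum]
  congr 1
  refine Finset.sum_congr rfl fun i _ => ?_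
  rw [mul_add, pow_add]; ring

theorem pks_modEq (f : ℕ → ℕ) (m n : ℕ) (h : n ≤ m) : pks f m ≡ pks f n [MOD 2 ^ (40 * n)] := by
  obtain ⟨k, rfl⟩ := Nat.exists_eq_add_of_le h
  rw [pks_split]
  exact (Nat.modEq_zero_iff_dvd.mpr (Dvd.intro _ rfl)).add_left (pks f n)

theorem pks_congr (f g : ℕ → ℕ) (n : ℕ) (h : ∀ i < n, f i = g i) : pks f n = pks g n :=
  Finset.sum_congr rfl fun i hi => by rw [h i (Finset.mem_range.mp hi)]

theorem pks_add (f g : ℕ → ℕ) (n : ℕ) : pks (fun i => f i + g i) n = pks f n + pks g n := by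
  unfold pks
  rw [← Finset.sum_add_distrib]
  exact Finset.sum_congr rfl fun i _ => by ring

theorem pks_mul (f : ℕ → ℕ) (c n : ℕ) : pks (fun i => c * f i) n = c * pks f n := by
  unfold pks
  rw [Finset.mul_sum]
  exact Finset.sum_congr rfl fun i _ => by ring

theorem pks_lt (f : ℕ → ℕ) (n : ℕ) (h : ∀ i < n, f i < 2 ^ 40) : pks f n < 2 ^ (40 * n) := by
  induction n with
  | zero => simp [pks]
  | succ n ih =>
    have h1 := ih fun i hi => h i (by omega)
    have h2 := h n (by omega)
    unfold pks at *
    rw [Finset.sum_range_succ, mul_add, pow_add]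
    have : f n * 2 ^ (40 * n) ≤ (2 ^ 40 - 1) * 2 ^ (40 * n) := Nat.mul_le_mul_right _ (by omega)
    calc _ < 2 ^ (40 * n) + (2 ^ 40 - 1) * 2 ^ (40 * n) := by omega
      _ = _ := by ring

theorem pks_digit (f : ℕ → ℕ) (n i : ℕ) (h : ∀ i < n, f i < 2 ^ 40) (hi : i < n) :
    pks f n / 2 ^ (40 * i) % 2 ^ 40 = f i := by
  have e : pks f n = pks f i + 2 ^ (40 * i) * (f i + 2 ^ 40 * pks (fun k => f (i + (1 + k))) (n - i - 1)) := by
    conv_lhs => rw [show n = i + (1 + (n - i - 1)) by omega]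
    rw [pks_split, pks_split]
    simp [pks]
  have hl := pks_lt f i fun k hk => h k (by omega)
  rw [e, Nat.add_mul_div_left _ _ (by positivity), Nat.div_eq_of_lt hl, zero_add, Nat.add_mul_mod_self_left,
    Nat.mod_eq_of_lt (h i hi)]

/-- all ones -/
def onz (n : ℕ) : ℕ := (2 ^ (40 * n) - 1) / (2 ^ 40 - 1)

theorem onz_eq (n : ℕ) : onz n = pks (fun _ => 1) n := by
  unfold onz pks
  simp only [one_mul, pow_mul]
  rw [Nat.geomSum_eq (by norm_num)]

def qp (d : ℕ) : ℕ → ℕ → ℕ → ℕ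
  | 0, _, P => P
  | f + 1, k, P => frc (P + ((P + k * onz (k * d)) <<< (40 * (k * d)))) (fun P' => qp d f (2 * k) P')

theorem qp_spec (d : ℕ) (hd : 0 < d) (f k P : ℕ) (h : P = pks (fun i => i / d) (k * d)) :
    qp d f k P = pks (fun i => i / d) (2 ^ f * k * d) := by
  induction f generalizing k P with
  | zero => simp [qp, h]
  | succ f ih =>
    rw [qp, frc_eq, ih (2 * k)]
    · congr 1; ring
    · rw [Nat.shiftLeft_eq, onz_eq, h, show 2 * k * d = k * d + k * d by ring, pks_split]
      congr 1
      rw [← pks_mul, ← pks_add, mul_comm]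
      congr 1
      refine pks_congr _ _ _ fun i _ => ?_
      simp only [mul_one]
      rw [add_comm (k * d), Nat.add_mul_div_right _ _ hd]

def qpW (W d : ℕ) : ℕ := qp d (Nat.log2 (W / d) + 1) 1 0

theorem qpW_spec (W d : ℕ) (hd : 0 < d) : qpW W d ≡ pks (fun i => i / d) W [MOD 2 ^ (40 * W)] := by
  unfold qpW
  rw [qp_spec d hd]
  · refine pks_modEq _ _ _ ?_
    have h1 : W / d < 2 ^ (Nat.log2 (W / d) + 1) := Nat.lt_log2_self
    rw [mul_one]
    rw [Nat.div_lt_iff_lt_mul hd] at h1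
    exact h1.le
  · have : pks (fun i => i / d) (1 * d) = pks (fun _ => 0) (1 * d) :=
      pks_congr _ _ _ fun i hi => Nat.div_eq_of_lt (by omega)
    rw [this]
    simp [pks]

def accL (W : ℕ) : List (ℕ × ℕ) → ℕ → ℕ
  | [], a => a
  | x :: t, a => frc (a + x.2 * x.1 * qpW W x.1) (fun a' => accL W t a')

def valL (L : List (ℕ × ℕ)) (w : ℕ) : ℕ := (L.map fun x => x.2 * x.1 * (w / x.1)).sum

theorem accL_spec (W : ℕ) (L : List (ℕ × ℕ)) (hL : ∀ x ∈ L, 0 < x.1) (a : ℕ) (g : ℕ → ℕ)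
    (ha : a ≡ pks g W [MOD 2 ^ (40 * W)]) :
    accL W L a ≡ pks (fun i => g i + valL L i) W [MOD 2 ^ (40 * W)] := by
  induction L generalizing a g with
  | nil => simpa [accL, valL] using ha
  | cons x t ih =>
    rw [accL, frc_eq]
    have := ih (fun y hy => hL y (List.mem_cons_of_mem _ hy)) (a + x.2 * x.1 * qpW W x.1)
      (fun i => g i + x.2 * x.1 * (i / x.1)) ?_
    · refine this.trans ?_
      rw [pks_congr]
      intro i _
      simp only [valL, List.map_cons, List.sum_cons]
      ring
    · rw [pks_add, pks_mul]
      exact ha.add ((qpW_spec W x.1 (hL x List.mem_cons_self)).mul_left _)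

def fwn (w : ℕ) : ℕ := ((w / 17) % 2) * ((w / 5) % 2)

theorem fwn_eq (w : ℕ) : fwn w = if fw w then 1 else 0 := by
  unfold fwn fw
  rcases Nat.mod_two_eq_zero_or_one (w / 17) with h1 | h1 <;>
    rcases Nat.mod_two_eq_zero_or_one (w / 5) with h2 | h2 <;> simp [h1, h2]

theorem fwn_per (w : ℕ) : fwn (170 + w) = fwn w := by
  rw [fwn_eq, fwn_eq]
  have : fw (170 + w) ↔ fw w := by unfold fw; omega
  simp only [this]

theorem fwn_per_mul (k w : ℕ) : fwn (170 * k + w) = fwn w := by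
  induction k with
  | zero => simp
  | succ k ih => rw [show 170 * (k + 1) + w = 170 + (170 * k + w) by ring, fwn_per, ih]

def pk0 : ℕ → ℕ
  | 0 => 0
  | n + 1 => pk0 n + (fwn n) <<< (40 * n)

theorem pk0_eq (n : ℕ) : pk0 n = pks fwn n := by
  induction n with
  | zero => simp [pk0, pks]
  | succ n ih => rw [pk0, ih, pks, pks, Finset.sum_range_succ, Nat.shiftLeft_eq]

def pfr : ℕ → ℕ → ℕ → ℕ
  | 0, _, P => P
  | f + 1, n, P => frc (P + P <<< (40 * n)) (fun P' => pfr f (2 * n) P')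

theorem pfr_spec (f k P : ℕ) (h : P = pks fwn (170 * k)) : pfr f (170 * k) P = pks fwn (170 * (2 ^ f * k)) := by
  induction f generalizing k P with
  | zero => simp [pfr, h]
  | succ f ih =>
    rw [pfr, frc_eq, show 2 * (170 * k) = 170 * (2 * k) by ring, ih (2 * k)]
    · congr 1; ring
    · rw [Nat.shiftLeft_eq, show 170 * (2 * k) = 170 * k + 170 * k by ring, pks_split, h]
      simp only [fwn_per_mul]
      exact congrArg _ (Nat.mul_comm _ _)

def accE (W : ℕ) : List (ℕ × ℕ) → ℕ → ℕ
  | [], a => a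
  | x :: t, a => frc (a + x.2 * (onz W <<< (40 * x.1))) (fun a' => accE W t a')

def valE (L : List (ℕ × ℕ)) (w : ℕ) : ℕ := (L.map fun x => if x.1 ≤ w then x.2 else 0).sum

theorem step_spec (W t : ℕ) (ht : t ≤ W) :
    onz W <<< (40 * t) ≡ pks (fun i => if t ≤ i then 1 else 0) W [MOD 2 ^ (40 * W)] := by
  have h1 := pks_modEq (fun i => if t ≤ i then 1 else 0) (t + W) W (by omega)
  rw [pks_split] at h1
  have h2 : pks (fun i => if t ≤ i then 1 else 0) t = 0 := by
    unfold pks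
    refine Finset.sum_eq_zero fun i hi => ?_
    have := Finset.mem_range.mp hi
    simp only
    rw [if_neg (by omega), zero_mul]
  have h3 : pks (fun i => if t ≤ t + i then 1 else 0) W = onz W := by
    rw [onz_eq]
    exact pks_congr _ _ _ fun i _ => if_pos (by omega)
  rw [h2, h3, zero_add] at h1
  rw [Nat.shiftLeft_eq, Nat.mul_comm (onz W)]
  exact h1

theorem accE_spec (W : ℕ) (L : List (ℕ × ℕ)) (hL : ∀ x ∈ L, x.1 ≤ W) (a : ℕ) (g : ℕ → ℕ)
    (ha : a ≡ pks g W [MOD 2 ^ (40 * W)]) :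
    accE W L a ≡ pks (fun i => g i + valE L i) W [MOD 2 ^ (40 * W)] := by
  induction L generalizing a g with
  | nil => simpa [accE, valE] using ha
  | cons x t ih =>
    rw [accE, frc_eq]
    have := ih (fun y hy => hL y (List.mem_cons_of_mem _ hy)) (a + x.2 * (onz W <<< (40 * x.1)))
      (fun i => g i + x.2 * (if x.1 ≤ i then 1 else 0)) ?_
    · refine this.trans ?_
      rw [pks_congr]
      intro i _
      simp only [valE, List.map_cons, List.sum_cons, mul_ite, mul_one, mul_zero]
      ring
    · rw [pks_add, pks_mul]
      exact ha.add ((step_spec W x.1 (hL x List.mem_cons_self)).mul_left _)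

def chkP (W : ℕ) (V : ℕ) (pos neg st : List (ℕ × ℕ)) : Bool :=
  frc (accL W pos 0) fun L =>
  frc (accE W st (accL W neg (V * pfr (Nat.log2 (W / 170) + 1) 170 (pk0 170)))) fun R =>
  frc (2 ^ 39 * onz W) fun M =>
  frc (R + M + 2 ^ (40 * (W + W))) fun G => 
    Nat.ble L G && Nat.beq (Nat.land (G - L) M) M

theorem digit_testBit (f : ℕ → ℕ) (n i G : ℕ) (h : ∀ i < n, f i < 2 ^ 40) (hi : i < n)
    (hG : G ≡ pks f n [MOD 2 ^ (40 * n)]) : G.testBit (40 * i + 39) = decide (2 ^ 39 ≤ f i) := by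
  have e1 : G.testBit (40 * i + 39) = (pks f n).testBit (40 * i + 39) := by
    have h1 : (G % 2 ^ (40 * n)).testBit (40 * i + 39) = (pks f n % 2 ^ (40 * n)).testBit (40 * i + 39) := by rw [hG]
    rw [Nat.testBit_mod_two_pow, Nat.testBit_mod_two_pow] at h1
    have : 40 * i + 39 < 40 * n := by omega
    simpa [this] using h1
  have e2 := pks_digit f n i h hi
  rw [e1]
  have e3 : (pks f n).testBit (40 * i + 39) = (pks f n / 2 ^ (40 * i) % 2 ^ 40).testBit 39 := by
    rw [Nat.testBit_mod_two_pow, Nat.testBit_div_two_pow]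
    simp [add_comm]
  rw [e3, e2, Nat.testBit_eq_decide_div_mod_eq]
  have := h i hi
  rw [decide_eq_decide]
  omega

theorem chkP_spec (W V : ℕ) (pos neg st : List (ℕ × ℕ)) (hpos : ∀ x ∈ pos, 0 < x.1) (hneg : ∀ x ∈ neg, 0 < x.1)
    (hst : ∀ x ∈ st, x.1 ≤ W)
    (hl : ∀ i < W, valL pos i < 2 ^ 39) (hr : ∀ i < W, V + valL neg i + valE st i < 2 ^ 39)
    (h : chkP W V pos neg st = true) (w : ℕ) (hw : w < W) :
    valL pos w ≤ V * fwn w + valL neg w + valE st w := by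
  unfold chkP at h
  rw [frc_eq, frc_eq, frc_eq, frc_eq, Bool.and_eq_true] at h
  obtain ⟨h1, h2⟩ := h
  have h1 := Nat.le_of_ble_eq_true h1
  have h2 := Nat.eq_of_beq_eq_true h2
  have hfw : ∀ i, fwn i ≤ 1 := fun i => by rw [fwn_eq]; split_ifs <;> omega
  have sL := accL_spec W pos hpos 0 (fun _ => 0) (by simp [pks]; rfl)
  have sF : V * pfr (Nat.log2 (W / 170) + 1) 170 (pk0 170) ≡ pks (fun i => V * fwn i) W [MOD 2 ^ (40 * W)] := by
    rw [pks_mul]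
    refine Nat.ModEq.mul_left _ ?_
    have := pfr_spec (Nat.log2 (W / 170) + 1) 1 (pk0 170) (pk0_eq 170)
    rw [mul_one] at this
    rw [this]
    refine pks_modEq _ _ _ ?_
    have h1 : W / 170 < 2 ^ (Nat.log2 (W / 170) + 1) := Nat.lt_log2_self
    rw [mul_one]
    rw [Nat.div_lt_iff_lt_mul (by norm_num)] at h1
    omega
  have sR := accE_spec W st hst _ _ (accL_spec W neg hneg _ _ sF)
  have sM : 2 ^ 39 * onz W = pks (fun _ => 2 ^ 39) W := by
    rw [onz_eq, ← pks_mul]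
    simp only [mul_one]
  set L := accL W pos 0
  set R := accE W st (accL W neg (V * pfr (Nat.log2 (W / 170) + 1) 170 (pk0 170)))
  set M := 2 ^ 39 * onz W
  have hVf : ∀ i, V * fwn i ≤ V := fun i => by
    have := Nat.mul_le_mul_left V (hfw i)
    omega
  have sG : R + M + 2 ^ (40 * (W + W)) - L
      ≡ pks (fun i => V * fwn i + valL neg i + valE st i + 2 ^ 39 - valL pos i) W [MOD 2 ^ (40 * W)] := by
    refine Nat.ModEq.add_right_cancel sL ?_
    rw [Nat.sub_add_cancel h1, ← pks_add]
    have e : pks (fun i => V * fwn i + valL neg i + valE st i + 2 ^ 39 - valL pos i + (0 + valL pos i)) W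
        = pks (fun i => V * fwn i + valL neg i + valE st i) W + M + 0 := by
      rw [sM, add_zero, ← pks_add]
      refine pks_congr _ _ _ fun i hi => ?_
      have := hl i hi
      omega
    rw [e]
    refine (sR.add_right _).add ?_
    refine Nat.modEq_zero_iff_dvd.mpr (pow_dvd_pow _ (by omega))
  have tb := digit_testBit _ W w _ (fun i hi => by
    have := hl i hi
    have := hr i hi
    have := hVf i
    omega) hw sG
  have tM := digit_testBit (fun _ => 2 ^ 39) W w M (fun i hi => by norm_num) hw (by rw [sM])
  have : (R + M + 2 ^ (40 * (W + W)) - L).testBit (40 * w + 39) = true := by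
    have h3 : (Nat.land (R + M + 2 ^ (40 * (W + W)) - L) M).testBit (40 * w + 39) = true := by
      rw [h2, tM]; simp
    change (_ &&& M).testBit _ = true at h3
    rw [Nat.testBit_and, Bool.and_eq_true] at h3
    exact h3.1
  rw [this] at tb
  have := of_decide_eq_true tb.symm
  have := hl w hw
  omega



def posL : List (ℕ × ℕ) :=
  [(17, 50000), (25, 34000), (40, 21250), (55, 15455), (60, 14167), (65, 13077), (95, 8947), (102, 8333), (135,
  6296), (140, 6071), (150, 11333), (155, 4592), (180, 4722), (204, 4167), (210, 4048), (220, 1641), (225,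
  3778), (235, 3617), (240, 3455), (255, 3333), (260, 2598), (265, 828), (272, 1446), (295, 2881), (305, 2057),
  (320, 443), (335, 2537), (340, 5000), (350, 1856), (355, 565), (357, 1851), (380, 4296), (390, 2179), (400,
  1289), (410, 160), (415, 704), (435, 994), (442, 817), (459, 1610), (460, 1551), (476, 1786), (480, 1483),
  (505, 1683), (520, 336), (525, 1140), (535, 392), (544, 839), (550, 2223), (560, 37), (565, 561), (570, 2587),
  (580, 1307), (595, 35), (600, 1152), (612, 555), (620, 935), (640, 433), (646, 887), (650, 2615), (690, 221),
  (695, 432), (700, 112), (735, 1156), (745, 808), (755, 236), (765, 682), (800, 245), (805, 1056), (810, 55),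
  (820, 957), (825, 123), (835, 1018), (840, 987), (850, 650), (855, 5), (860, 991), (867, 15), (870, 192),
  (880, 334), (884, 92), (900, 135), (910, 192), (930, 720), (935, 517), (950, 1086), (965, 304), (969, 127),
  (975, 90), (986, 719), (995, 363), (1000, 335), (1054, 378), (1105, 19), (1156, 1492), (1190, 594), (1224,
  375), (1292, 348), (1326, 175), (1343, 293), (1360, 246), (1428, 547), (1445, 449), (1479, 95), (1513, 191),
  (1530, 57), (1547, 289), (1564, 273)]

def negL : List (ℕ × ℕ) :=
  [(20, 42500), (30, 28333), (34, 25000), (50, 17000), (51, 16667), (68, 12500), (75, 11333), (110, 7727), (119,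
  175), (120, 6910), (130, 13077), (160, 4448), (170, 5000), (175, 4857), (190, 8947), (200, 4250), (221, 1633),
  (230, 3696), (238, 3484), (270, 166), (275, 4522), (280, 3036), (285, 2982), (289, 318), (290, 2614), (300,
  2833), (306, 2050), (310, 2296), (323, 867), (325, 2615), (360, 1836), (385, 2032), (405, 2099), (408, 769),
  (420, 4048), (425, 1311), (430, 5), (440, 1803), (450, 1889), (455, 1868), (465, 1332), (470, 1479), (475,
  1789), (493, 1724), (527, 755), (530, 792), (540, 1880), (590, 1441), (605, 921), (610, 1282), (625, 468),
  (630, 1349), (655, 194), (660, 61), (670, 2151), (675, 136), (680, 1250), (705, 873), (710, 693), (714, 671),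
  (715, 639), (720, 568), (725, 869), (730, 42), (731, 1121), (750, 361), (760, 1356), (775, 918), (780, 866),
  (795, 276), (816, 98), (833, 995), (895, 297), (905, 324), (918, 726), (920, 40), (925, 331), (940, 368),
  (945, 74), (952, 636), (960, 215), (980, 535), (1003, 855), (1020, 662), (1037, 378), (1088, 654), (1122,
  425), (1139, 1235), (1207, 126), (1241, 582), (1377, 149), (1394, 66), (1581, 168), (1615, 37), (1632, 64),
  (1649, 564), (1666, 188), (1700, 1161)]

def stepL : List (ℕ × ℕ) :=
  [(30, 10), (55, 8), (60, 35), (75, 35), (204, 104), (221, 257), (355, 54), (440, 476), (530, 309), (1050,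
  1796758), (1241, 909), (2665, 128889), (2675, 209720), (2680, 258725), (2686, 127684), (2695, 67972), (5885,
  200912), (6025, 393918), (9185, 1046963), (9200, 342504), (33925, 22750), (37150, 466781), (37250, 757005),
  (90585, 915418), (136000, 54967729)]

theorem chkP_data : chkP 136000 850000 posL negL stepL = true := by decide +kernel

def prodL : List (ℕ × ℕ) → ℕ → ℕ
  | [], a => a
  | x :: t, a => frc (a * x.1 ^ x.2) (fun a' => prodL t a')

def prodchk (pos neg : List (ℕ × ℕ)) (p : ℕ) : Bool :=
  Nat.ble (prodL pos 1 * 27182818286 ^ p) (prodL neg 1 * 10000000000 ^ p)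

theorem prod_data : prodchk posL negL 17067 = true := by
  decide +kernel


theorem valL_le (L : List (ℕ × ℕ)) (w : ℕ) : valL L w ≤ w * (L.map Prod.snd).sum := by
  induction L with
  | nil => simp [valL]
  | cons x t ih =>
    simp only [valL, List.map_cons, List.sum_cons] at *
    have : x.2 * x.1 * (w / x.1) ≤ w * x.2 := by
      calc _ = x.2 * (x.1 * (w / x.1)) := by ring
        _ ≤ x.2 * w := Nat.mul_le_mul_left _ (Nat.mul_div_le w x.1)
        _ = _ := by ring
    rw [mul_add]
    omega

theorem valL_ge (L : List (ℕ × ℕ)) (hL : ∀ x ∈ L, 0 < x.1) (w : ℕ) :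
    w * (L.map Prod.snd).sum ≤ valL L w + (L.map fun x => x.2 * (x.1 - 1)).sum := by
  induction L with
  | nil => simp
  | cons x t ih =>
    have ih := ih fun y hy => hL y (List.mem_cons_of_mem _ hy)
    have hx := hL x List.mem_cons_self
    simp only [valL, List.map_cons, List.sum_cons] at *
    have : w * x.2 ≤ x.2 * x.1 * (w / x.1) + x.2 * (x.1 - 1) := by
      have h1 := Nat.div_add_mod w x.1
      have h2 := Nat.mod_lt w hx
      calc w * x.2 ≤ (x.1 * (w / x.1) + (x.1 - 1)) * x.2 := Nat.mul_le_mul_right _ (by omega)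
        _ = _ := by ring
    rw [mul_add]
    omega

theorem valE_le (L : List (ℕ × ℕ)) (w : ℕ) : valE L w ≤ (L.map Prod.snd).sum := by
  induction L with
  | nil => simp [valE]
  | cons x t ih =>
    simp only [valE, List.map_cons, List.sum_cons] at *
    split_ifs <;> omega

theorem valE_eq (L : List (ℕ × ℕ)) (w : ℕ) (h : ∀ x ∈ L, x.1 ≤ w) : valE L w = (L.map Prod.snd).sum := by
  unfold valE
  congr 1
  refine List.map_congr_left fun x hx => ?_
  rw [if_pos (h x hx)]

theorem posL_rng : ∀ x ∈ posL, 17 ≤ x.1 ∧ x.1 ≤ 1700 := by decide +kernel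
theorem negL_rng : ∀ x ∈ negL, 17 ≤ x.1 ∧ x.1 ≤ 1700 := by decide +kernel
theorem stepL_rng : ∀ x ∈ stepL, 1 ≤ x.1 ∧ x.1 ≤ 136000 := by decide +kernel
theorem posL_sum : (posL.map Prod.snd).sum = 299706 := by decide +kernel
theorem negL_sum : (negL.map Prod.snd).sum = 299706 := by decide +kernel
theorem stepL_sum : (stepL.map Prod.snd).sum = 61705925 := by decide +kernel
theorem negL_sum2 : (negL.map fun x => x.2 * (x.1 - 1)).sum = 61705925 := by decide +kernel
theorem posL_sum3 : (posL.map fun x => x.2 * x.1).sum = 61830669 := by decide +kernel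
theorem negL_sum3 : (negL.map fun x => x.2 * x.1).sum = 62005631 := by decide +kernel

theorem val_all (w : ℕ) : valL posL w ≤ 850000 * fwn w + valL negL w + valE stepL w := by
  rcases Nat.lt_or_ge w 136000 with hw | hw
  · refine chkP_spec 136000 850000 posL negL stepL (fun x hx => by have := posL_rng x hx; omega)
      (fun x hx => by have := negL_rng x hx; omega) (fun x hx => (stepL_rng x hx).2) ?_ ?_ chkP_data w hw
    · intro i hi
      have := valL_le posL i
      rw [posL_sum] at this
      omega
    · intro i hi
      have := valL_le negL i
      rw [negL_sum] at this
      have := valE_le stepL i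
      rw [stepL_sum] at this
      omega
  · have h1 := valL_le posL w
    have h2 := valL_ge negL (fun x hx => by have := negL_rng x hx; omega) w
    have h3 := valE_eq stepL w (fun x hx => by have := stepL_rng x hx; omega)
    rw [posL_sum] at h1
    rw [negL_sum, negL_sum2] at h2
    rw [stepL_sum] at h3
    omega

def IL : List (ℕ × ℤ) := posL.map (fun x => (x.1, (x.2 : ℤ))) ++ negL.map (fun x => (x.1, -(x.2 : ℤ)))

theorem castL (L : List (ℕ × ℕ)) (w : ℕ) : (L.map fun x => (x.2 : ℤ) * x.1 * ((w / x.1 : ℕ) : ℤ)).sum = valL L w := by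
  induction L with
  | nil => simp [valL]
  | cons x t ih =>
    simp only [valL, List.map_cons, List.sum_cons] at *
    rw [ih]
    simp only [Nat.cast_add, Nat.cast_mul]

theorem castLn (L : List (ℕ × ℕ)) (w : ℕ) : (L.map fun x => (-(x.2 : ℤ)) * x.1 * ((w / x.1 : ℕ) : ℤ)).sum = -valL L w := by
  induction L with
  | nil => simp [valL]
  | cons x t ih =>
    simp only [valL, List.map_cons, List.sum_cons] at *
    rw [ih]
    simp only [Nat.cast_add, Nat.cast_mul]
    ring

theorem castE (L : List (ℕ × ℕ)) (w : ℕ) : (L.map fun x => if x.1 ≤ w then (x.2 : ℤ) else 0).sum = valE L w := by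
  induction L with
  | nil => simp [valE]
  | cons x t ih =>
    simp only [valE, List.map_cons, List.sum_cons] at *
    rw [ih]
    split_ifs <;> simp

noncomputable def lgs (L : List (ℕ × ℕ)) : ℝ := (L.map fun x => (x.2 : ℝ) * Real.log x.1).sum

theorem prodL_eq (L : List (ℕ × ℕ)) (hL : ∀ x ∈ L, 17 ≤ x.1) (a : ℕ) (ha : 0 < a) :
    0 < prodL L a ∧ Real.log (prodL L a) = Real.log a + lgs L := by
  induction L generalizing a with
  | nil => simp [prodL, lgs, ha]
  | cons x t ih =>
    have hx := hL x List.mem_cons_self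
    have hx0 : 0 < x.1 := by omega
    have := ih (fun y hy => hL y (List.mem_cons_of_mem _ hy)) (a * x.1 ^ x.2) (by positivity)
    rw [prodL, frc_eq]
    refine ⟨this.1, ?_⟩
    rw [this.2]
    simp only [lgs, List.map_cons, List.sum_cons, Nat.cast_mul, Nat.cast_pow]
    rw [Real.log_mul (by positivity) (by positivity), Real.log_pow]
    ring

theorem ble_log (A B p : ℕ) (hA : 0 < A) (hB : 0 < B)
    (hAB : Nat.ble (A * 27182818286 ^ p) (B * 10000000000 ^ p) = true) :
    Real.log A + p ≤ Real.log B := by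
  have h : ((A * 27182818286 ^ p : ℕ) : ℝ) ≤ ((B * 10000000000 ^ p : ℕ) : ℝ) :=
    Nat.cast_le.mpr (Nat.le_of_ble_eq_true hAB)
  rw [Nat.cast_mul, Nat.cast_mul, Nat.cast_pow, Nat.cast_pow] at h
  have p1 : (0 : ℝ) < A := by exact_mod_cast hA
  have p2 : (0 : ℝ) < B := by exact_mod_cast hB
  have h2 := Real.log_le_log (mul_pos p1 (pow_pos (by norm_num) _)) h
  rw [Real.log_mul p1.ne' (pow_pos (by norm_num) _).ne', Real.log_mul p2.ne' (pow_pos (by norm_num) _).ne',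
    Real.log_pow, Real.log_pow] at h2
  have h3 : 1 ≤ Real.log ((27182818286 : ℕ) : ℝ) - Real.log ((10000000000 : ℕ) : ℝ) := by
    rw [← Real.log_div (by norm_num) (by norm_num), Real.le_log_iff_exp_le (by norm_num)]
    refine Real.exp_one_lt_d9.le.trans ?_
    norm_num
  have h4 := mul_le_mul_of_nonneg_left h3 (show (0 : ℝ) ≤ p by positivity)
  linarith

theorem lgs_gen (pos neg : List (ℕ × ℕ)) (p : ℕ) (hpos : ∀ x ∈ pos, 17 ≤ x.1) (hneg : ∀ x ∈ neg, 17 ≤ x.1)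
    (hc : prodchk pos neg p = true) : lgs pos + p ≤ lgs neg := by
  have hp := prodL_eq pos hpos 1 (by norm_num)
  have hn := prodL_eq neg hneg 1 (by norm_num)
  unfold prodchk at hc
  have h := ble_log (prodL pos 1) (prodL neg 1) p hp.1 hn.1 hc
  rw [hp.2, hn.2, Nat.cast_one, Real.log_one, zero_add, zero_add] at h
  exact h

theorem lgs_data : lgs posL + 17067 ≤ lgs negL := by
  have h := lgs_gen posL negL 17067 (fun x hx => (posL_rng x hx).1) (fun x hx => (negL_rng x hx).1) prod_data
  have h4 : ((17067 : ℕ) : ℝ) = 17067 := by norm_num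
  rw [h4] at h
  exact h

theorem sum_map_neg_aux {α : Type} (L : List α) (f : α → ℝ) : (L.map fun x => -f x).sum = -(L.map f).sum := by
  induction L with
  | nil => simp
  | cons x t ih => simp only [List.map_cons, List.sum_cons, ih]; ring

theorem fac_lower (K : ℕ) (hK : 10 ≤ K) (L : List (ℕ × ℕ)) (hL : ∀ x ∈ L, 17 ≤ x.1 ∧ x.1 ≤ 1700) :
    170 * K * ((Real.log (170 * K) - 1) * ((L.map Prod.snd).sum : ℕ) - lgs L)
      - Real.log (10 * K) / 2 * ((L.map fun x => x.2 * x.1).sum : ℕ)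
      ≤ (L.map fun x => (x.2 : ℝ) * x.1 * Real.log (170 * K / x.1 : ℕ).factorial).sum := by
  induction L with
  | nil => simp [lgs]
  | cons x t ih =>
    have ih := ih fun y hy => hL y (List.mem_cons_of_mem _ hy)
    obtain ⟨h1, h2⟩ := hL x List.mem_cons_self
    have h1' : (17 : ℝ) ≤ x.1 := by exact_mod_cast h1
    have h2' : (x.1 : ℝ) ≤ 1700 := by exact_mod_cast h2
    have hK' : (10 : ℝ) ≤ K := by exact_mod_cast hK
    simp only [lgs, List.map_cons, List.sum_cons] at *
    have s := stl_lower (((170 * K : ℕ) : ℝ) / x.1) (by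
      rw [le_div_iff₀ (by linarith)]; push_cast; linarith)
    rw [Nat.floor_div_eq_div] at s
    push_cast at s
    have hl : Real.log (170 * K / x.1) ≤ Real.log (10 * K) := by
      refine Real.log_le_log (by positivity) ?_
      rw [div_le_iff₀ (by linarith)]
      nlinarith
    have e : Real.log (170 * K / x.1) = Real.log (170 * K) - Real.log x.1 :=
      Real.log_div (by positivity) (by positivity)
    have s2 : 170 * K * (Real.log (170 * K) - Real.log x.1 - 1) - x.1 * (Real.log (10 * K) / 2)
        ≤ x.1 * Real.log (170 * K / x.1 : ℕ).factorial := by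
      have := mul_le_mul_of_nonneg_left s (show (0 : ℝ) ≤ x.1 by linarith)
      rw [← e]
      have e2 : (x.1 : ℝ) * (170 * K / x.1 * Real.log (170 * K / x.1) - 170 * K / x.1 - Real.log (170 * K / x.1) / 2)
          = 170 * K * (Real.log (170 * K / x.1) - 1) - x.1 * (Real.log (170 * K / x.1) / 2) := by
        field_simp
      nlinarith
    have s3 := mul_le_mul_of_nonneg_left s2 (show (0 : ℝ) ≤ x.2 by positivity)
    rw [Nat.cast_add, Nat.cast_add, Nat.cast_mul]
    linarith

theorem fac_upper (K : ℕ) (hK : 10 ≤ K) (L : List (ℕ × ℕ)) (hL : ∀ x ∈ L, 17 ≤ x.1 ∧ x.1 ≤ 1700) :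
    (L.map fun x => (x.2 : ℝ) * x.1 * Real.log (170 * K / x.1 : ℕ).factorial).sum ≤
    170 * K * ((Real.log (170 * K) - 1) * ((L.map Prod.snd).sum : ℕ) - lgs L)
      + (Real.log (10 * K) / 2 + 1) * ((L.map fun x => x.2 * x.1).sum : ℕ) := by
  induction L with
  | nil => simp [lgs]
  | cons x t ih =>
    have ih := ih fun y hy => hL y (List.mem_cons_of_mem _ hy)
    obtain ⟨h1, h2⟩ := hL x List.mem_cons_self
    have h1' : (17 : ℝ) ≤ x.1 := by exact_mod_cast h1
    have h2' : (x.1 : ℝ) ≤ 1700 := by exact_mod_cast h2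
    have hK' : (10 : ℝ) ≤ K := by exact_mod_cast hK
    simp only [lgs, List.map_cons, List.sum_cons] at *
    have s := stl_upper (((170 * K : ℕ) : ℝ) / x.1) (by
      rw [le_div_iff₀ (by linarith)]; push_cast; linarith)
    rw [Nat.floor_div_eq_div] at s
    push_cast at s
    have hl : Real.log (170 * K / x.1) ≤ Real.log (10 * K) := by
      refine Real.log_le_log (by positivity) ?_
      rw [div_le_iff₀ (by linarith)]
      nlinarith
    have e : Real.log (170 * K / x.1) = Real.log (170 * K) - Real.log x.1 :=
      Real.log_div (by positivity) (by positivity)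
    have s2 : x.1 * Real.log (170 * K / x.1 : ℕ).factorial ≤
        170 * K * (Real.log (170 * K) - Real.log x.1 - 1) + x.1 * (Real.log (10 * K) / 2 + 1) := by
      have := mul_le_mul_of_nonneg_left s (show (0 : ℝ) ≤ x.1 by linarith)
      rw [← e]
      have e2 : (x.1 : ℝ) * (170 * K / x.1 * Real.log (170 * K / x.1) - 170 * K / x.1 + Real.log (170 * K / x.1) / 2 + 1)
          = 170 * K * (Real.log (170 * K / x.1) - 1) + x.1 * (Real.log (170 * K / x.1) / 2 + 1) := by
        field_simp
        ring
      nlinarith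
    have s3 := mul_le_mul_of_nonneg_left s2 (show (0 : ℝ) ≤ x.2 by positivity)
    rw [Nat.cast_add, Nat.cast_add, Nat.cast_mul]
    linarith

theorem psi_sum (K : ℕ) (L : List (ℕ × ℕ)) :
    (L.map fun x => (x.2 : ℝ) * Chebyshev.psi ((170 * K / x.1 : ℕ) : ℝ)).sum
      ≤ 1.12 * (170 * K) * (((L.map fun x => (x.2 : ℚ) / x.1).sum : ℚ) : ℝ) := by
  induction L with
  | nil => simp
  | cons x t ih =>
    simp only [List.map_cons, List.sum_cons, Rat.cast_add, mul_add]
    refine add_le_add ?_ ih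
    have h1 := psi_bound (170 * K / x.1)
    have h2 : ((170 * K / x.1 : ℕ) : ℝ) ≤ ((170 * K : ℕ) : ℝ) / x.1 := Nat.cast_div_le
    have h3 : Chebyshev.psi ((170 * K / x.1 : ℕ) : ℝ) ≤ 1.12 * (((170 * K : ℕ) : ℝ) / x.1) := by
      refine h1.trans (mul_le_mul_of_nonneg_left h2 (by norm_num))
    have := mul_le_mul_of_nonneg_left h3 (show (0 : ℝ) ≤ x.2 by positivity)
    refine this.trans (le_of_eq ?_)
    push_cast
    ring

theorem stepL_rat : (stepL.map fun x => (x.2 : ℚ) / x.1).sum ≤ 27116 / 10 := by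
  simp only [stepL, List.map_cons, List.map_nil, List.sum_cons, List.sum_nil]
  norm_num

theorem log_gg_bound (K : ℕ) (hK : 30000 ≤ K) : 2.765 * (K : ℝ) ≤ Real.log (gg (17 * K) (5 * K)) := by
  have hK' : (30000 : ℝ) ≤ K := by exact_mod_cast hK
  have t := transfer K (by omega) IL 850000 stepL (fun x hx => by have := stepL_rng x hx; omega) ?_
  swap
  · intro w
    unfold IL
    rw [List.map_append, List.sum_append, List.map_map, List.map_map, castE]
    have e1 := castL posL w
    have e2 := castLn negL w
    simp only [Function.comp_def]
    rw [e1, e2]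
    have h := val_all w
    rw [fwn_eq] at h
    have h' : ((valL posL w : ℕ) : ℤ) ≤ ((850000 * (if fw w then 1 else 0) + valL negL w + valE stepL w : ℕ) : ℤ) := by
      exact_mod_cast h
    push_cast at h' ⊢
    linarith
  have eI : (IL.map fun x => (x.2 : ℝ) * x.1 * Real.log (170 * K / x.1 : ℕ).factorial).sum
      = (posL.map fun x => (x.2 : ℝ) * x.1 * Real.log (170 * K / x.1 : ℕ).factorial).sum
        - (negL.map fun x => (x.2 : ℝ) * x.1 * Real.log (170 * K / x.1 : ℕ).factorial).sum := by
    unfold IL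
    rw [List.map_append, List.sum_append, List.map_map, List.map_map, sub_eq_add_neg, ← sum_map_neg_aux]
    simp only [Function.comp_def, Int.cast_natCast, Int.cast_neg, neg_mul]
  rw [eI] at t
  have l := fac_lower K (by omega) posL posL_rng
  have u := fac_upper K (by omega) negL negL_rng
  rw [posL_sum, posL_sum3] at l
  rw [negL_sum, negL_sum3] at u
  have p := psi_sum K stepL
  have r : ((((stepL.map fun x => (x.2 : ℚ) / x.1).sum : ℚ)) : ℝ) ≤ 2711.6 := by
    have := stepL_rat
    have h : ((((stepL.map fun x => (x.2 : ℚ) / x.1).sum : ℚ)) : ℝ) ≤ ((27116 / 10 : ℚ) : ℝ) := by exact_mod_cast this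
    refine h.trans ?_
    norm_num
  have p2 : (stepL.map fun x => (x.2 : ℝ) * Chebyshev.psi ((170 * K / x.1 : ℕ) : ℝ)).sum ≤ 1.12 * (170 * K) * 2711.6 :=
    p.trans (mul_le_mul_of_nonneg_left r (by positivity))
  have hd := mul_le_mul_of_nonneg_left lgs_data (show (0 : ℝ) ≤ 170 * K by positivity)
  have hlog : Real.log (10 * K) ≤ 12.62 + (K / 30000 - 1) := by
    have a := log_le_of_pow 300000 (by norm_num) 631 50 (by norm_num) (by
      set_option exponentiation.threshold 3000 in norm_num)
    have b := Real.log_le_sub_one_of_pos (show (0 : ℝ) < 10 * K / 300000 by positivity)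
    rw [Real.log_div (by positivity) (by norm_num)] at b
    norm_num at a ⊢
    linarith
  push_cast at t l u
  norm_num at p2 hlog ⊢
  linarith


/-- division-free Newton iteration for the square root of two -/
def nsq : ℕ → ℕ → ℕ → (ℕ → ℕ → Bool) → Bool
  | 0, s, B, k => k s B
  | f + 1, s, B, k =>
    frc (Nat.shiftRight (Nat.add (Nat.shiftLeft s B)
      (Nat.shiftRight (Nat.mul (Nat.sub (Nat.shiftLeft 2 (2 * B)) (Nat.mul s s)) s) (B + 2))) 3) fun s' =>
    frc (2 * B - 3) fun B' => nsq f s' B' k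

theorem nsq_ex (f s B : ℕ) (k : ℕ → ℕ → Bool) (h : nsq f s B k = true) : ∃ s B, k s B = true := by
  induction f generalizing s B with
  | zero => exact ⟨s, B, h⟩
  | succ f ih =>
    rw [nsq, frc_eq, frc_eq] at h
    exact ih _ _ h

/-- the block of sixteen binary digits after position `p` is not constant -/
def blk (s B p : ℕ) : Bool :=
  frc (Nat.mod (Nat.shiftRight s (B - p - 16)) 65536) fun t =>
    and (Nat.ble (p + 20) B) (and (Nat.ble 1 t) (Nat.ble t 65534))

def blks : ℕ → ℕ → ℕ → ℕ → Bool
  | 0, p, _, _ => Nat.ble 6150000 p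
  | f + 1, p, s, B => frc (p + p * 2 / 5) fun p' => and (blk s B p') (blks f p' s B)

def finchk (s B : ℕ) : Bool :=
  frc (Nat.shiftLeft 2 (2 * B)) fun T => and (and (Nat.ble (Nat.mul s s) T)
    (Nat.ble T (Nat.mul (s + 2) (s + 2)))) (blks 30 256 s B)

theorem nsq_data : nsq 16 448182167798289119349855505819 98 finchk = true := by decide +kernel

theorem blk_spec (s B p : ℕ) (h : blk s B p = true) :
    p + 20 ≤ B ∧ ∀ Y : ℕ, (Y : ℤ) * 2 ^ (B - p) + 2 ^ (B - p - 16) ≤ s ∨ (s : ℤ) + 2 ^ (B - p - 16) ≤ Y * 2 ^ (B - p) := by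
  unfold blk at h
  rw [frc_eq, Bool.and_eq_true, Bool.and_eq_true, Nat.ble_eq, Nat.ble_eq, Nat.ble_eq] at h
  obtain ⟨h0, h1, h2⟩ := h
  refine ⟨h0, fun Y => ?_⟩
  obtain ⟨c, hc⟩ : ∃ c, B - p = c + 16 := ⟨B - p - 16, by omega⟩
  rw [hc, Nat.add_sub_cancel]
  have hc2 : B - p - 16 = c := by omega
  rw [hc2] at h1 h2
  change 1 ≤ (s >>> c) % 65536 at h1
  change (s >>> c) % 65536 ≤ 65534 at h2
  rw [Nat.shiftRight_eq_div_pow] at h1 h2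
  have e1 := Nat.div_add_mod s (2 ^ c)
  have e3 := Nat.mod_lt s (show 0 < 2 ^ c by positivity)
  generalize s / 2 ^ c = u at *
  generalize s % 2 ^ c = v at *
  have key : (Y : ℤ) * 65536 + 1 ≤ u ∨ (u : ℤ) + 2 ≤ Y * 65536 := by omega
  have hc0 : (0 : ℤ) < 2 ^ c := by positivity
  have e1' : (2 : ℤ) ^ c * u + v = s := by exact_mod_cast e1
  have e3' : (v : ℤ) < 2 ^ c := by exact_mod_cast e3
  have hp : (2 : ℤ) ^ (c + 16) = 65536 * 2 ^ c := by rw [pow_add]; ring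
  rw [hp]
  rcases key with k | k
  · left
    nlinarith [mul_le_mul_of_nonneg_left k hc0.le]
  · right
    nlinarith [mul_le_mul_of_nonneg_left k hc0.le]

theorem blks_spec (f p s B : ℕ) (h : blks f p s B = true) (m : ℕ) (h1 : p ≤ m) (h2 : m < 6150000) :
    ∃ q, m ≤ q ∧ 5 * q ≤ 7 * m ∧ blk s B q = true := by
  induction f generalizing p with
  | zero =>
    rw [blks, Nat.ble_eq] at h
    omega
  | succ f ih =>
    rw [blks, frc_eq, Bool.and_eq_true] at h
    rcases Nat.le_total m (p + p * 2 / 5) with hm | hm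
    · exact ⟨p + p * 2 / 5, hm, by omega, h.1⟩
    · exact ih _ h.2 hm

theorem finchk_spec (s B : ℕ) (h : finchk s B = true) :
    |(2 : ℝ) ^ B * √2 - s| ≤ 2 ∧ blks 30 256 s B = true := by
  unfold finchk at h
  rw [frc_eq, Bool.and_eq_true, Bool.and_eq_true, Nat.ble_eq, Nat.ble_eq] at h
  obtain ⟨⟨h1, h2⟩, h3⟩ := h
  refine ⟨?_, h3⟩
  clear h3
  change s * s ≤ 2 <<< (2 * B) at h1
  change 2 <<< (2 * B) ≤ (s + 2) * (s + 2) at h2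
  rw [Nat.shiftLeft_eq] at h1 h2
  have h1' : (s : ℝ) * s ≤ 2 * 2 ^ (2 * B) := by exact_mod_cast h1
  have h2' : (2 : ℝ) * 2 ^ (2 * B) ≤ (s + 2) * (s + 2) := by exact_mod_cast h2
  have e : (2 : ℝ) * 2 ^ (2 * B) = (2 ^ B * √2) ^ 2 := by
    rw [mul_pow, Real.sq_sqrt (by norm_num), pow_mul']; ring
  rw [e] at h1' h2'
  have hs : (0 : ℝ) ≤ s := by positivity
  have h4 : (0 : ℝ) ≤ 2 ^ B * √2 := by positivity
  rw [abs_le]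
  constructor
  · nlinarith
  · nlinarith

theorem mid_aux (m : ℕ) (h1 : 256 ≤ m) (h2 : m < 6150000) : ∃ s B q : ℕ, |(2 : ℝ) ^ B * √2 - s| ≤ 2 ∧
    m ≤ q ∧ 5 * q ≤ 7 * m ∧ q + 20 ≤ B ∧
    ∀ Y : ℕ, (Y : ℤ) * 2 ^ (B - q) + 2 ^ (B - q - 16) ≤ s ∨ (s : ℤ) + 2 ^ (B - q - 16) ≤ Y * 2 ^ (B - q) := by
  obtain ⟨s, B, hsB⟩ := nsq_ex _ _ _ _ nsq_data
  obtain ⟨hs, hb⟩ := finchk_spec s B hsB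
  obtain ⟨q, hq1, hq2, hq⟩ := blks_spec _ _ _ _ hb m h1 h2
  obtain ⟨hqB, hY⟩ := blk_spec _ _ _ hq
  exact ⟨s, B, q, hs, hq1, hq2, hqB, hY⟩

/-- the finite range -/
theorem mid_range (m X : ℕ) (h1 : 256 ≤ m) (h2 : m < 6150000) (hX : |(X : ℝ) - 2 ^ m * √2| ≤ 2 ^ (-(0.48 : ℝ) * m)) :
    False := by
  obtain ⟨s, B, q, hs, hq1, hq2, hqB, hY⟩ := mid_aux m h1 h2
  have hY := hY (2 ^ (q - m) * X)
  have hd : (2 : ℝ) ^ (-(0.48 : ℝ) * m) * 2 ^ (B - m) ≤ 2 ^ (B - q - 17) := by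
    rw [← Real.rpow_natCast, ← Real.rpow_natCast, ← Real.rpow_add (by norm_num)]
    refine Real.rpow_le_rpow_of_exponent_le (by norm_num) ?_
    have a1 : ((B - m : ℕ) : ℝ) = B - m := Nat.cast_sub (by omega)
    have a2 : ((B - q - 17 : ℕ) : ℝ) = B - q - 17 := by
      rw [Nat.sub_sub, Nat.cast_sub (by omega)]; push_cast; ring
    rw [a1, a2]
    have a3 : (5 : ℝ) * q ≤ 7 * m := by exact_mod_cast hq2
    have a4 : (256 : ℝ) ≤ m := by exact_mod_cast h1
    linarith
  have e1 : (2 : ℝ) ^ B = 2 ^ m * 2 ^ (B - m) := by rw [← pow_add]; congr 1; omega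
  have e2 : (2 : ℝ) ^ (q - m) * 2 ^ (B - q) = 2 ^ (B - m) := by rw [← pow_add]; congr 1; omega
  have e3 : (2 : ℝ) ^ (B - q - 16) = 2 * 2 ^ (B - q - 17) := by rw [← pow_succ']; congr 1; omega
  have e4 : (8 : ℝ) ≤ 2 ^ (B - q - 17) := by
    calc (8 : ℝ) = 2 ^ 3 := by norm_num
      _ ≤ _ := pow_le_pow_right₀ (by norm_num) (by omega)
  have hm := mul_le_mul_of_nonneg_right hX (show (0 : ℝ) ≤ 2 ^ (B - m) by positivity)
  have e5 : |(X : ℝ) - 2 ^ m * √2| * 2 ^ (B - m) = |(X : ℝ) * 2 ^ (B - m) - 2 ^ B * √2| := by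
    rw [e1, ← abs_of_nonneg (show (0 : ℝ) ≤ 2 ^ (B - m) by positivity), ← abs_mul, abs_of_nonneg (show (0 : ℝ) ≤ 2 ^ (B - m) by positivity)]
    congr 1; ring
  rw [e5] at hm
  have hm := abs_le.mp (hm.trans hd)
  have hs := abs_le.mp hs
  have e6 : ((2 ^ (q - m) * X : ℕ) : ℝ) * 2 ^ (B - q) = X * 2 ^ (B - m) := by
    rw [← e2]; push_cast; ring
  rcases hY with k | k
  · have k : ((2 ^ (q - m) * X : ℕ) : ℝ) * 2 ^ (B - q) + 2 ^ (B - q - 16) ≤ s := by exact_mod_cast k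
    rw [e6, e3] at k
    linarith
  · have k : (s : ℝ) + 2 ^ (B - q - 16) ≤ ((2 ^ (q - m) * X : ℕ) : ℝ) * 2 ^ (B - q) := by exact_mod_cast k
    rw [e6, e3] at k
    linarith

/-- direct check for small exponents -/
def smallOK (m D sg : ℕ) : Bool :=
  or (Nat.ble (2 ^ (13 * (2 * m + 1)) + 1) (D ^ 50))
    (and (Nat.beq D sg) (Nat.ble (2 ^ (13 * (2 * m + 1)) + 1) ((D + 8) ^ 50)))

/-- nearest odd squares below and above -/
def smallchk2 (m r T : ℕ) : Bool :=
  and (and (Nat.ble (r * r) T) (Nat.ble (T + 1) ((r + 2) * (r + 2))))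
    (and (Nat.beq (r % 2) 1) (and (smallOK m (T - r * r) 7) (smallOK m ((r + 2) * (r + 2) - T) 1)))

def smallchk (m : ℕ) : Bool :=
  frc (Nat.shiftRight (Nat.sqrt (2 ^ 561)) (280 - m)) fun r =>
    frc (2 ^ (2 * m + 1)) fun T => smallchk2 m (r - (1 - r % 2)) T

theorem small_data : ∀ m : ℕ, m < 260 → 1 ≤ m → smallchk m = true := by decide +kernel

theorem smallOK_spec (m D sg : ℕ) (h : smallOK m D sg = true) (E : ℕ) (hE : D = E ∨ D + 8 ≤ E) :
    E = sg ∨ (2 : ℝ) ^ ((0.26 : ℝ) * (2 * m + 1 : ℕ)) < E := by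
  have key : ∀ F : ℕ, F ≤ E → 2 ^ (13 * (2 * m + 1)) + 1 ≤ F ^ 50 →
      (2 : ℝ) ^ ((0.26 : ℝ) * (2 * m + 1 : ℕ)) < E := by
    intro F hF h
    have h1 : ((2 : ℝ) ^ ((0.26 : ℝ) * (2 * m + 1 : ℕ))) ^ 50 < (E : ℝ) ^ 50 := by
      have e : ((2 : ℝ) ^ ((0.26 : ℝ) * (2 * m + 1 : ℕ))) ^ 50 = 2 ^ (13 * (2 * m + 1)) := by
        rw [← Real.rpow_natCast, ← Real.rpow_mul (by norm_num), ← Real.rpow_natCast]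
        congr 1; push_cast; ring
      rw [e]
      have h2 : 2 ^ (13 * (2 * m + 1)) < E ^ 50 := lt_of_lt_of_le (Nat.lt_of_succ_le h) (Nat.pow_le_pow_left hF 50)
      exact_mod_cast h2
    exact lt_of_pow_lt_pow_left₀ 50 (by positivity) h1
  unfold smallOK at h
  rw [Bool.or_eq_true, Bool.and_eq_true, Nat.ble_eq, Nat.ble_eq, Nat.beq_eq] at h
  rcases h with h | ⟨h, h'⟩
  · exact Or.inr (key D (by omega) h)
  · rcases hE with hE | hE
    · left; omega
    · exact Or.inr (key _ hE h')

theorem small_range2 (m r X : ℕ) (h : smallchk2 m r (2 ^ (2 * m + 1)) = true) (hX : Odd X) :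
    (X : ℤ) ^ 2 - 2 ^ (2 * m + 1) = 1 ∨ (X : ℤ) ^ 2 - 2 ^ (2 * m + 1) = -7 ∨
      ((|(X : ℤ) ^ 2 - 2 ^ (2 * m + 1)| : ℤ) : ℝ) > (2 : ℝ) ^ ((0.26 : ℝ) * (2 * m + 1 : ℕ)) := by
  unfold smallchk2 at h
  rw [Bool.and_eq_true, Bool.and_eq_true, Bool.and_eq_true, Bool.and_eq_true, Nat.ble_eq, Nat.ble_eq, Nat.beq_eq] at h
  obtain ⟨⟨h1, h2⟩, h3, h4, h5⟩ := h
  have e : (2 : ℤ) ^ (2 * m + 1) = ((2 ^ (2 * m + 1) : ℕ) : ℤ) := by push_cast; ring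
  rw [e]
  generalize 2 ^ (2 * m + 1) = T at *
  obtain ⟨x, rfl⟩ := hX
  obtain ⟨c, rfl⟩ : ∃ c, r = 2 * c + 1 := ⟨r / 2, by omega⟩
  rcases Nat.lt_or_ge c x with hc | hc
  · obtain ⟨t, rfl⟩ := Nat.exists_eq_add_of_le (Nat.succ_le_of_lt hc)
    have hle : (2 * c + 1 + 2) * (2 * c + 1 + 2) ≤ (2 * (c.succ + t) + 1) ^ 2 := by
      rw [Nat.succ_eq_add_one]; nlinarith
    have := smallOK_spec _ _ _ h5 ((2 * (c.succ + t) + 1) ^ 2 - T) (by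
      rcases Nat.eq_zero_or_pos t with rfl | ht
      · left; rw [Nat.succ_eq_add_one]; congr 1; ring
      · right
        have : (2 * c + 1 + 2) * (2 * c + 1 + 2) + 8 ≤ (2 * (c.succ + t) + 1) ^ 2 := by
          rw [Nat.succ_eq_add_one]; nlinarith
        omega)
    rcases this with k | k
    · left
      have : (2 * (c.succ + t) + 1) ^ 2 = T + 1 := by omega
      have : (((2 * (c.succ + t) + 1) ^ 2 : ℕ) : ℤ) = T + 1 := by rw [this]; push_cast; ring
      rw [Nat.cast_pow] at this
      linarith
    · right; right
      have e2 : ((2 * (c.succ + t) + 1 : ℕ) : ℤ) ^ 2 - T = (((2 * (c.succ + t) + 1) ^ 2 - T : ℕ) : ℤ) := by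
        rw [Nat.cast_sub (by omega), Nat.cast_pow]
      rw [e2, Nat.abs_cast, Int.cast_natCast]
      exact k
  · obtain ⟨t, rfl⟩ := Nat.exists_eq_add_of_le hc
    have hle : (2 * x + 1) ^ 2 ≤ (2 * (x + t) + 1) * (2 * (x + t) + 1) := by nlinarith
    have := smallOK_spec _ _ _ h4 (T - (2 * x + 1) ^ 2) (by
      rcases Nat.eq_zero_or_pos t with rfl | ht
      · left; congr 1; ring
      · right
        have : (2 * x + 1) ^ 2 + 8 ≤ (2 * (x + t) + 1) * (2 * (x + t) + 1) := by nlinarith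
        omega)
    rcases this with k | k
    · right; left
      have : (2 * x + 1) ^ 2 + 7 = T := by omega
      rw [← this]
      push_cast; ring
    · right; right
      have e2 : ((2 * x + 1 : ℕ) : ℤ) ^ 2 - T = -((T - (2 * x + 1) ^ 2 : ℕ) : ℤ) := by
        rw [Nat.cast_sub (by omega), Nat.cast_pow]; ring
      rw [e2, abs_neg, Nat.abs_cast, Int.cast_natCast]
      exact k

theorem smallchk_ex (m : ℕ) (h : smallchk m = true) : ∃ r, smallchk2 m r (2 ^ (2 * m + 1)) = true := by
  unfold smallchk at h
  rw [frc_eq, frc_eq] at h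
  exact ⟨_, h⟩

theorem small_rng_all (m X : ℕ) (hm : 1 ≤ m) (hm2 : m < 260) (hX : Odd X) :
    (X : ℤ) ^ 2 - 2 ^ (2 * m + 1) = 1 ∨ (X : ℤ) ^ 2 - 2 ^ (2 * m + 1) = -7 ∨
      ((|(X : ℤ) ^ 2 - 2 ^ (2 * m + 1)| : ℤ) : ℝ) > (2 : ℝ) ^ ((0.26 : ℝ) * (2 * m + 1 : ℕ)) := by
  obtain ⟨r, hr⟩ := smallchk_ex m (small_data m hm2 hm)
  exact small_range2 m r X hr hX

theorem even_range (k X : ℕ) (hk : 1 ≤ k) (hX : Odd X) :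
    ((|(X : ℤ) ^ 2 - 2 ^ (2 * k)| : ℤ) : ℝ) > (2 : ℝ) ^ ((0.26 : ℝ) * (2 * k : ℕ)) := by
  have hne : (X : ℤ) - 2 ^ k ≠ 0 := by
    intro h
    have h1 : X = 2 ^ k := by
      have : (X : ℤ) = 2 ^ k := by linarith
      exact_mod_cast this
    have h2 : Even X := by rw [h1]; exact (Nat.even_pow.mpr ⟨even_two, by omega⟩)
    exact (Nat.not_even_iff_odd.mpr hX) h2
  have h1 : (2 : ℤ) ^ k ≤ |(X : ℤ) ^ 2 - 2 ^ (2 * k)| := by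
    have e : (X : ℤ) ^ 2 - 2 ^ (2 * k) = (X - 2 ^ k) * (X + 2 ^ k) := by rw [pow_mul']; ring
    have p : (0 : ℤ) < 2 ^ k := by positivity
    rw [e, abs_mul, abs_of_pos (show (0 : ℤ) < X + 2 ^ k by positivity)]
    have := Int.one_le_abs hne
    have hX0 : (0 : ℤ) ≤ X := by positivity
    nlinarith
  have h2 : (2 : ℝ) ^ k ≤ ((|(X : ℤ) ^ 2 - 2 ^ (2 * k)| : ℤ) : ℝ) := by exact_mod_cast h1
  refine lt_of_lt_of_le ?_ h2
  rw [← Real.rpow_natCast]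
  refine Real.rpow_lt_rpow_of_exponent_lt (by norm_num) ?_
  have : (1 : ℝ) ≤ k := by exact_mod_cast hk
  push_cast; linarith

/-- a small value of the form gives a good approximation -/
theorem close_of_small (m X : ℕ) (h : ((|(X : ℤ) ^ 2 - 2 ^ (2 * m + 1)| : ℤ) : ℝ) ≤ (2 : ℝ) ^ ((0.26 : ℝ) * (2 * m + 1 : ℕ))) :
    |(X : ℝ) - 2 ^ m * √2| ≤ 2 ^ (-(0.48 : ℝ) * m) := by
  have p : (0 : ℝ) < 2 ^ m := by positivity
  have e : ((|(X : ℤ) ^ 2 - 2 ^ (2 * m + 1)| : ℤ) : ℝ) = |(X : ℝ) - 2 ^ m * √2| * (X + 2 ^ m * √2) := by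
    rw [← abs_of_nonneg (show (0 : ℝ) ≤ X + 2 ^ m * √2 by positivity), ← abs_mul]
    push_cast
    congr 1
    have : √2 * √2 = (2 : ℝ) := Real.mul_self_sqrt (by norm_num)
    have e2 : (2 : ℝ) ^ (2 * m + 1) = 2 ^ m * 2 ^ m * 2 := by rw [pow_succ, two_mul, pow_add]
    rw [e2]
    linear_combination (2 ^ m * 2 ^ m : ℝ) * this
  rw [e] at h
  have h14 : (2 : ℝ) ^ (0.26 : ℝ) ≤ √2 := by
    rw [Real.sqrt_eq_rpow]
    exact Real.rpow_le_rpow_of_exponent_le (by norm_num) (by norm_num)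
  have e3 : (2 : ℝ) ^ ((0.26 : ℝ) * (2 * m + 1 : ℕ)) = 2 ^ (-(0.48 : ℝ) * m) * (2 ^ m * 2 ^ (0.26 : ℝ)) := by
    rw [← Real.rpow_natCast 2 m, ← Real.rpow_add (by norm_num), ← Real.rpow_add (by norm_num)]
    congr 1; push_cast; ring
  rw [e3] at h
  have q : (0 : ℝ) < 2 ^ m * √2 := by positivity
  have h5 : |(X : ℝ) - 2 ^ m * √2| * (2 ^ m * √2) ≤ 2 ^ (-(0.48 : ℝ) * m) * (2 ^ m * √2) := by
    calc _ ≤ |(X : ℝ) - 2 ^ m * √2| * (X + 2 ^ m * √2) :=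
          mul_le_mul_of_nonneg_left (by linarith [show (0 : ℝ) ≤ X by positivity]) (abs_nonneg _)
      _ ≤ _ := h
      _ ≤ _ := by gcongr
  exact le_of_mul_le_mul_right h5 q


theorem choose_log (K : ℕ) (hK : 1 ≤ K) :
    |Real.log ((22 * K).choose (5 * K)) - K * (22 * Real.log 22 - 17 * Real.log 17 - 5 * Real.log 5)|
      ≤ 3 / 2 * Real.log (22 * K) + 2 := by
  have hK' : (1 : ℝ) ≤ K := by exact_mod_cast hK
  have e : Real.log ((22 * K).choose (5 * K)) = Real.log (22 * K).factorial - Real.log (17 * K).factorial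
      - Real.log (5 * K).factorial := by
    have h := Nat.choose_mul_factorial_mul_factorial (show 5 * K ≤ 22 * K by omega)
    rw [show 22 * K - 5 * K = 17 * K by omega] at h
    have hc : 0 < (22 * K).choose (5 * K) := Nat.choose_pos (by omega)
    have p1 := (5 * K).factorial_pos
    have p2 := (17 * K).factorial_pos
    rw [← h, Nat.cast_mul, Nat.cast_mul, Real.log_mul (by positivity) (by positivity),
      Real.log_mul (by positivity) (by positivity)]
    ring
  have key : ∀ c : ℕ, 1 ≤ c → c ≤ 22 →
      c * K * (Real.log c + Real.log K) - c * K - Real.log (22 * K) / 2 ≤ Real.log (c * K).factorial ∧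
      Real.log (c * K).factorial ≤ c * K * (Real.log c + Real.log K) - c * K + Real.log (22 * K) / 2 + 1 := by
    intro c hc hc2
    have c1 : (1 : ℝ) ≤ c := by exact_mod_cast hc
    have c2 : (c : ℝ) ≤ 22 := by exact_mod_cast hc2
    have h1 : (1 : ℝ) ≤ ((c * K : ℕ) : ℝ) := by exact_mod_cast Nat.mul_pos hc hK
    have u := stl_upper _ h1
    have l := stl_lower _ h1
    rw [Nat.floor_natCast, Nat.cast_mul] at u l
    have m := Real.log_le_log (show (0 : ℝ) < c * K by positivity) (show (c : ℝ) * K ≤ 22 * K by gcongr)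
    rw [Real.log_mul (by positivity) (by positivity)] at u l m
    constructor <;> linarith
  have k1 := key 22 (by norm_num) (by norm_num)
  have k2 := key 17 (by norm_num) (by norm_num)
  have k3 := key 5 (by norm_num) (by norm_num)
  rw [e, abs_le]
  push_cast at k1 k2 k3
  constructor <;> linarith

set_option exponentiation.threshold 3000 in
theorem H_lo : (790 / 67 : ℝ) ≤ 22 * Real.log 22 - 17 * Real.log 17 - 5 * Real.log 5 := by
  have h := le_log_of_pow (22 ^ 22 / (17 ^ 17 * 5 ^ 5)) (by norm_num) 790 67 (by norm_num) (by norm_num)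
  rw [Real.log_div (by norm_num) (by norm_num), Real.log_mul (by norm_num) (by norm_num), Real.log_pow, Real.log_pow,
    Real.log_pow] at h
  norm_num at h ⊢
  linarith

set_option exponentiation.threshold 3000 in
theorem H_hi : 22 * Real.log 22 - 17 * Real.log 17 - 5 * Real.log 5 ≤ (1073 / 91 : ℝ) := by
  have h := log_le_of_pow (22 ^ 22 / (17 ^ 17 * 5 ^ 5)) (by norm_num) 1073 91 (by norm_num) (by norm_num)
  rw [Real.log_div (by norm_num) (by norm_num), Real.log_mul (by norm_num) (by norm_num), Real.log_pow, Real.log_pow,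
    Real.log_pow] at h
  norm_num at h ⊢
  linarith

theorem log7_hi : Real.log 7 ≤ (72 / 37 : ℝ) := by
  have h := log_le_of_pow 7 (by norm_num) 72 37 (by norm_num) (by norm_num)
  norm_num at h ⊢
  linarith

theorem log22K (K : ℕ) (hK : 30000 ≤ K) : Real.log (22 * K) ≤ 13 + 0.00003 * K := by
  have hK' : (30000 : ℝ) ≤ K := by exact_mod_cast hK
  have b := Real.log_le_sub_one_of_pos (show (0 : ℝ) < 22 * K / 2 ^ 20 by positivity)
  rw [Real.log_div (by positivity) (by norm_num), Real.log_pow] at b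
  have := Real.log_two_lt_d9
  norm_num at b
  linarith

theorem term1 (K m : ℕ) (hK : 30000 ≤ K) (h2 : 51057 * K ≤ 250 * m + 51057) :
    181 * (2 : ℝ) ^ (-(0.48 : ℝ) * m) * (2 ^ (17 * (5 * K)) * ((22 * K).choose (5 * K) : ℝ))
      < Real.exp (2.765 * K) / 2 := by
  have hc : 0 < (22 * K).choose (5 * K) := Nat.choose_pos (by omega)
  have hc' : (0 : ℝ) < (22 * K).choose (5 * K) := by exact_mod_cast hc
  have hK' : (30000 : ℝ) ≤ K := by exact_mod_cast hK
  have h2' : (51057 : ℝ) * K ≤ 250 * m + 51057 := by exact_mod_cast h2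
  rw [← Real.log_lt_log_iff (by positivity) (by positivity), Real.log_div (by positivity) (by norm_num), Real.log_exp,
    Real.log_mul (by positivity) (by positivity), Real.log_mul (by positivity) (by positivity),
    Real.log_mul (by positivity) (by positivity), Real.log_pow, Real.log_rpow (by norm_num)]
  have a := (abs_le.mp (choose_log K (by omega))).2
  have b := log22K K hK
  have c := mul_le_mul_of_nonneg_left H_hi (show (0 : ℝ) ≤ K by positivity)
  have e : Real.log 181 ≤ 8 * Real.log 2 := by
    have := Real.log_le_log (by norm_num) (show (181 : ℝ) ≤ 2 ^ 8 by norm_num)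
    rw [Real.log_pow] at this
    exact_mod_cast this
  have l1 := Real.log_two_gt_d9
  have l2 := Real.log_two_lt_d9
  have f := mul_le_mul_of_nonneg_right h2' (show 0 ≤ Real.log 2 by linarith)
  have g := mul_le_mul_of_nonneg_right l1.le (show (0 : ℝ) ≤ K by positivity)
  push_cast
  norm_num at *
  have hK2 : (30000 : ℝ) ≤ K := by exact_mod_cast hK
  linarith

theorem term2 (K m d : ℕ) (hK : 30000 ≤ K) (hd : m = d + 204 * K) (h2 : 250 * m ≤ 51057 * K) :
    256 * (2 : ℝ) ^ d * 2 ^ (17 * (17 * K)) * (((5 * K : ℕ) + 1) / 2 * (7 / 2 ^ 15) ^ (22 * K + 1) /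
      (32761 / 32768 * (((22 * K).choose (5 * K) : ℝ) * (32761 / 32768) ^ (5 * K))))
      < Real.exp (2.765 * K) / 2 := by
  have hc : 0 < (22 * K).choose (5 * K) := Nat.choose_pos (by omega)
  have hc' : (0 : ℝ) < (22 * K).choose (5 * K) := by exact_mod_cast hc
  have hK' : (30000 : ℝ) ≤ K := by exact_mod_cast hK
  have h2' : (250 : ℝ) * d ≤ 57 * K := by
    have : 250 * d ≤ 57 * K := by omega
    exact_mod_cast this
  have hw : -(0.0003 : ℝ) ≤ Real.log (32761 / 32768) := by
    have := Real.one_sub_inv_le_log_of_pos (show (0 : ℝ) < 32761 / 32768 by norm_num)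
    norm_num at this ⊢
    linarith
  have hw2 : Real.log (7 / 2 ^ 15) = Real.log 7 - 15 * Real.log 2 := by
    rw [Real.log_div (by norm_num) (by norm_num), Real.log_pow]; norm_num
  have hq : Real.log (((5 * K : ℕ) + 1) / 2) ≤ Real.log (22 * K) := by
    refine Real.log_le_log (by positivity) ?_
    push_cast; linarith
  rw [← Real.log_lt_log_iff (by positivity) (by positivity), Real.log_div (by positivity) (by norm_num), Real.log_exp,
    Real.log_mul (by positivity) (by positivity), Real.log_mul (by positivity) (by positivity),
    Real.log_mul (by positivity) (by positivity), Real.log_div (by positivity) (by positivity),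
    Real.log_mul (by positivity) (by positivity), Real.log_mul (by positivity) (by positivity),
    Real.log_mul (by positivity) (by positivity), Real.log_pow, Real.log_pow, Real.log_pow, Real.log_pow, hw2]
  have a := (abs_le.mp (choose_log K (by omega))).1
  have b := log22K K hK
  have c := mul_le_mul_of_nonneg_left H_lo (show (0 : ℝ) ≤ K by positivity)
  have e : Real.log 256 = 8 * Real.log 2 := by
    rw [show (256 : ℝ) = 2 ^ 8 by norm_num, Real.log_pow]; norm_num
  have l1 := Real.log_two_gt_d9
  have l2 := Real.log_two_lt_d9
  have f := mul_le_mul_of_nonneg_right h2' (show 0 ≤ Real.log 2 by linarith)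
  have g := mul_le_mul_of_nonneg_right l1.le (show (0 : ℝ) ≤ K by positivity)
  have s := mul_le_mul_of_nonneg_left log7_hi (show (0 : ℝ) ≤ K by positivity)
  have w := mul_le_mul_of_nonneg_left hw (show (0 : ℝ) ≤ K by positivity)
  have s7 := log7_hi
  rw [e]
  push_cast
  norm_num at *
  have hK2 : (30000 : ℝ) ≤ K := by exact_mod_cast hK
  linarith

theorem large_range (m X : ℕ) (hm : 6150000 ≤ m) (hodd : Odd X)
    (hX : |(X : ℝ) - 2 ^ m * √2| ≤ 2 ^ (-(0.48 : ℝ) * m)) : False := by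
  obtain ⟨K, hK1, hK2⟩ : ∃ K, 250 * m ≤ 51057 * K ∧ 51057 * K ≤ 250 * m + 51057 :=
    ⟨250 * m / 51057 + 1, by omega, by omega⟩
  have hK : 30000 ≤ K := by omega
  obtain ⟨d, hd⟩ : ∃ d, m = d + 204 * K := ⟨m - 204 * K, by omega⟩
  have hlog : Nat.log 2 (5 * K) ≤ d := by
    refine (Nat.log_lt_of_lt_pow (by omega) ?_).le
    obtain ⟨t, ht⟩ : ∃ t, d = t + 10 := ⟨d - 10, by omega⟩
    have := Nat.lt_two_pow_self (n := t)
    rw [ht, pow_add]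
    omega
  have M := main_ineq (17 * K) (5 * K) d (by omega) (by omega) hlog X hodd
  have em : d + 17 * (17 * K - 5 * K) = m := by omega
  rw [em] at M
  have hQ := Q_mono (17 * K) (5 * K) (by omega) (32761 / 32768) 1 (by norm_num) (by norm_num)
  rw [S0_one (2 * (17 * K : ℕ) - 1) (2 * (5 * K : ℕ) + 1) (5 * K) (22 * K) (by push_cast; ring)] at hQ
  have hR := pade_remainder (17 * K) (5 * K) (by omega) (by omega) (32761 / 32768) (by norm_num) (by norm_num)
  rw [show 17 * K + 5 * K = 22 * K by ring, show (1 : ℝ) - 32761 / 32768 = 7 / 2 ^ 15 by norm_num] at hR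
  have t1 := term1 K m hK hK2
  have t2 := term2 K m d hK hd hK1
  have G := log_gg_bound K hK
  have gpos : (0 : ℝ) < gg (17 * K) (5 * K) := by
    rcases Nat.eq_zero_or_pos (gg (17 * K) (5 * K)) with h | h
    · rw [h, Nat.cast_zero, Real.log_zero] at G
      have hK' : (30000 : ℝ) ≤ K := by exact_mod_cast hK
      linarith
    · exact_mod_cast h
  rw [Real.le_log_iff_exp_le gpos] at G
  generalize S0 (2 * (17 * K : ℕ) - 1) (2 * (5 * K : ℕ) + 1) (5 * K) (32761 / 32768) = Q at *
  generalize S0 (2 * (5 * K : ℕ) + 1) (2 * (17 * K : ℕ) - 1) (17 * K) (32761 / 32768) = P at *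
  have i1 : 181 * |(X : ℝ) - 2 ^ m * √2| * (2 ^ (17 * (5 * K)) * Q) ≤
      181 * (2 : ℝ) ^ (-(0.48 : ℝ) * m) * (2 ^ (17 * (5 * K)) * ((22 * K).choose (5 * K) : ℝ)) := by
    calc _ ≤ 181 * |(X : ℝ) - 2 ^ m * √2| * (2 ^ (17 * (5 * K)) * ((22 * K).choose (5 * K) : ℝ)) := by gcongr
      _ ≤ _ := by gcongr
  have i2 := mul_le_mul_of_nonneg_left hR (show (0 : ℝ) ≤ 256 * (2 : ℝ) ^ d * 2 ^ (17 * (17 * K)) by positivity)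
  linarith

theorem stmt_8 (X n : ℕ) (hX : 0 < X) (hodd : Odd X) (hn : 1 < n) :
    (X : ℤ) ^ 2 - 2 ^ n = 1 ∨ (X : ℤ) ^ 2 - 2 ^ n = -7 ∨
      ((|(X : ℤ) ^ 2 - 2 ^ n| : ℤ) : ℝ) > (2 : ℝ) ^ ((0.26 : ℝ) * n) := by
  rcases Nat.even_or_odd' n with ⟨m, rfl | rfl⟩
  · exact Or.inr (Or.inr (even_range m X (by omega) hodd))
  · rcases Nat.lt_or_ge m 260 with h | h
    · exact small_rng_all m X (by omega) h hodd
    · right; right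
      by_contra hcon
      have hc := close_of_small m X (not_lt.mp hcon)
      rcases Nat.lt_or_ge m 6150000 with h2 | h2
      · exact mid_range m X (by omega) h2 hc
      · exact large_range m X h2 hodd hc
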